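/- arXiv:2102.10241 — 5 statements merged into one kernel-verified Lean document; each statement's English description precedes it below -/
import Mathlib

section
/- Let k ≥ 2 and let n1, n2, n1', n2' be positive integers with n1 + n2 = n1' + n2' and max{n1, n2} < max{n1', n2'}. Then the largest eigenvalue of D(n1,k,n2) is strictly greater than the largest eigenvalue of D(n1',k,n2'), i.e. λ(D(n1,k,n2)) > λ(D(n1',k,n2')). -/
open Matrix

noncomputable section

/-- Distance matrix of the path on `m` vertices: entry `(i,j)` is `|i - j|`. -/
def pathD (m : ℕ) : Matrix (Fin m) (Fin m) ℝ := fun i j => |(i : ℝ) - (j : ℝ)|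

/-- The vector `(1, 2, …, m)ᵀ`. -/
def uVec (m : ℕ) : Fin m → ℝ := fun i => (i : ℝ) + 1

/-- The reversed vector `(m, m-1, …, 1)ᵀ`. -/
def wVec (m : ℕ) : Fin m → ℝ := fun i => (m : ℝ) - (i : ℝ)

/-- Largest real eigenvalue of a matrix. -/
def maxEig {ι : Type} [Fintype ι] (A : Matrix ι ι ℝ) : ℝ :=
  sSup {μ : ℝ | ∃ v : ι → ℝ, v ≠ 0 ∧ A.mulVec v = μ • v}

/-- Distance matrix of the clique path `ℙ_{n1+1,2,…,2,n2+1}` with `k` cliques. -/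
def cliquePathD (n1 k n2 : ℕ) :
    Matrix (Fin n1 ⊕ Fin (k - 1) ⊕ Fin n2) (Fin n1 ⊕ Fin (k - 1) ⊕ Fin n2) ℝ :=
  fun p q =>
    match p, q with
    | Sum.inl i, Sum.inl j => if i = j then 0 else 1
    | Sum.inl _, Sum.inr (Sum.inl j) => uVec (k - 1) j
    | Sum.inl _, Sum.inr (Sum.inr _) => (k : ℝ)
    | Sum.inr (Sum.inl i), Sum.inl _ => uVec (k - 1) i
    | Sum.inr (Sum.inl i), Sum.inr (Sum.inl j) => pathD (k - 1) i j
    | Sum.inr (Sum.inl i), Sum.inr (Sum.inr _) => wVec (k - 1) i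
    | Sum.inr (Sum.inr _), Sum.inl _ => (k : ℝ)
    | Sum.inr (Sum.inr _), Sum.inr (Sum.inl j) => wVec (k - 1) j
    | Sum.inr (Sum.inr i), Sum.inr (Sum.inr j) => if i = j then 0 else 1

/-!
Fix `μ = maxEig` of the less balanced matrix, with clique sizes `p`, `q`. Its positive eigenvector
is constant on the cliques, with values `a`, `b` and masses `s = p a`, `t = q b`. The eigenvector
equations in terms of `s`, `t`, `a`, `b` no longer involve the sizes, are linear, and are invariant
under the mirror symmetry of the path.

* Subtracting the mirror image gives an antisymmetric solution. The path has negative type (its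
  distance matrix is nonpositive on vectors of sum zero), and `μ` exceeds half of `∑ |u - w|`; this
  forces `(s - t) (a - b) < 0`, so the clique with the larger mass has the smaller value.
* If `μ` were at least the largest eigenvalue for the sizes `p'`, `q'`, the Rayleigh quotients of
  `g` times the solution plus its mirror image would give a nonnegative quadratic polynomial in `g`.
  For `p + q = p' + q'`, its discriminant is a positive multiple of
  `-(s² - t²) (a² - b²) (p' q' - p q)`, which is positive when `p q < p' q'`.
-/

/-! ### The largest eigenvalue of a symmetric matrix -/

section Entrywise

variable {ι : Type*} [Fintype ι] {A : Matrix ι ι ℝ}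

lemma two_mul_dotProduct_le (x z : ι → ℝ) :
    2 * (x ⬝ᵥ z) ≤ x ⬝ᵥ x + z ⬝ᵥ z := by
  rw [dotProduct, dotProduct, dotProduct, Finset.mul_sum, ← Finset.sum_add_distrib]
  exact Finset.sum_le_sum fun i _ => by linarith [sq_nonneg (x i - z i)]

lemma dotProduct_mulVec_le_abs (hA : ∀ i j, 0 ≤ A i j) (v : ι → ℝ) :
    v ⬝ᵥ A *ᵥ v ≤ |v| ⬝ᵥ A *ᵥ |v| := by
  simp only [dotProduct, mulVec, Finset.mul_sum, Pi.abs_apply]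
  refine Finset.sum_le_sum fun i _ => Finset.sum_le_sum fun j _ => ?_
  calc v i * (A i j * v j) = A i j * (v i * v j) := by ring
    _ ≤ A i j * |v i * v j| := mul_le_mul_of_nonneg_left (le_abs_self _) (hA i j)
    _ = |v i| * (A i j * |v j|) := by rw [abs_mul]; ring

lemma pos_of_mulVec_eq_smul (hA : ∀ i j, 0 ≤ A i j) (hpos : ∀ i j, i ≠ j → 0 < A i j)
    {μ : ℝ} {w : ι → ℝ} (hw : 0 ≤ w) (hw0 : w ≠ 0) (h : A *ᵥ w = μ • w) (i : ι) : 0 < w i := by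
  refine (hw i).lt_of_ne' fun hi => hw0 (funext fun j => ?_)
  have hrow : ∑ j, A i j * w j = 0 := by simpa [hi, mulVec, dotProduct] using congrFun h i
  rw [Finset.sum_eq_zero_iff_of_nonneg fun j _ => mul_nonneg (hA i j) (hw j)] at hrow
  obtain rfl | hij := eq_or_ne i j
  · exact hi
  · exact (mul_eq_zero.1 (hrow j (Finset.mem_univ j))).resolve_left (hpos i j hij).ne'

end Entrywise

section Perron

variable {ι : Type} [Fintype ι] {A : Matrix ι ι ℝ}

lemma maxEig_eq_sSup_spectrum [DecidableEq ι] (A : Matrix ι ι ℝ) :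
    maxEig A = sSup (spectrum ℝ A) := by
  have hset : {μ : ℝ | ∃ v : ι → ℝ, v ≠ 0 ∧ A *ᵥ v = μ • v} = spectrum ℝ A := by
    ext μ
    rw [← spectrum_toLin', ← Module.End.hasEigenvalue_iff_mem_spectrum,
      Module.End.hasEigenvalue_iff, Submodule.ne_bot_iff]
    simp [and_comm]
  rw [maxEig, hset]

lemma posSemidef_maxEig_smul_one_sub [DecidableEq ι] (hA : A.IsHermitian) :
    (maxEig A • (1 : Matrix ι ι ℝ) - A).PosSemidef := by
  refine posSemidef_iff_isHermitian_and_spectrum_nonneg.2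
    ⟨(isHermitian_one.smul (IsSelfAdjoint.all (maxEig A))).sub hA, ?_⟩
  rw [← Algebra.algebraMap_eq_smul_one, ← spectrum.singleton_sub_eq]
  rintro _ ⟨_, rfl, μ, hμ, rfl⟩
  rw [maxEig_eq_sSup_spectrum]
  exact sub_nonneg.2 (le_csSup A.finite_spectrum.bddAbove hμ)

lemma dotProduct_maxEig_smul_one_sub_mulVec [DecidableEq ι] (A : Matrix ι ι ℝ) (v : ι → ℝ) :
    v ⬝ᵥ (maxEig A • (1 : Matrix ι ι ℝ) - A) *ᵥ v = maxEig A * (v ⬝ᵥ v) - v ⬝ᵥ A *ᵥ v := by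
  simp only [sub_mulVec, smul_mulVec, one_mulVec, dotProduct_sub, dotProduct_smul, smul_eq_mul]

lemma dotProduct_mulVec_le_maxEig_mul (hA : A.IsHermitian) (v : ι → ℝ) :
    v ⬝ᵥ A *ᵥ v ≤ maxEig A * (v ⬝ᵥ v) := by
  classical
  have h := (posSemidef_maxEig_smul_one_sub hA).dotProduct_mulVec_nonneg v
  rwa [star_trivial, dotProduct_maxEig_smul_one_sub_mulVec, sub_nonneg] at h

lemma mulVec_eq_maxEig_smul_of_le (hA : A.IsHermitian) {v : ι → ℝ}
    (hv : maxEig A * (v ⬝ᵥ v) ≤ v ⬝ᵥ A *ᵥ v) : A *ᵥ v = maxEig A • v := by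
  classical
  have h := ((posSemidef_maxEig_smul_one_sub hA).dotProduct_mulVec_zero_iff v).1 <| by
    rw [star_trivial, dotProduct_maxEig_smul_one_sub_mulVec, sub_eq_zero]
    exact le_antisymm hv (dotProduct_mulVec_le_maxEig_mul hA v)
  rw [sub_mulVec, smul_mulVec, one_mulVec, sub_eq_zero] at h
  exact h.symm

lemma exists_mulVec_eq_maxEig_smul [Nonempty ι] (hA : A.IsHermitian) :
    ∃ v : ι → ℝ, v ≠ 0 ∧ A *ᵥ v = maxEig A • v := by
  classical
  have hmem : maxEig A ∈ spectrum ℝ A := by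
    rw [maxEig_eq_sSup_spectrum]
    exact Set.Nonempty.csSup_mem ⟨_, hA.eigenvalues_mem_spectrum_real (Classical.arbitrary ι)⟩
      A.finite_spectrum
  rw [← spectrum_toLin', ← Module.End.hasEigenvalue_iff_mem_spectrum] at hmem
  obtain ⟨v, hv⟩ := hmem.exists_hasEigenvector
  exact ⟨v, hv.2, hv.apply_eq_smul⟩

theorem exists_pos_mulVec_eq_maxEig_smul [Nonempty ι] (hA : A.IsHermitian)
    (hnonneg : ∀ i j, 0 ≤ A i j) (hpos : ∀ i j, i ≠ j → 0 < A i j) :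
    ∃ w : ι → ℝ, (∀ i, 0 < w i) ∧ A *ᵥ w = maxEig A • w := by
  obtain ⟨v, hv0, hv⟩ := exists_mulVec_eq_maxEig_smul hA
  have habs : A *ᵥ |v| = maxEig A • |v| := by
    refine mulVec_eq_maxEig_smul_of_le hA ?_
    calc maxEig A * (|v| ⬝ᵥ |v|) = maxEig A * (v ⬝ᵥ v) := by simp [dotProduct]
      _ = v ⬝ᵥ A *ᵥ v := by rw [hv, dotProduct_smul, smul_eq_mul]
      _ ≤ |v| ⬝ᵥ A *ᵥ |v| := dotProduct_mulVec_le_abs hnonneg v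
  exact ⟨|v|, pos_of_mulVec_eq_smul hnonneg hpos (abs_nonneg v) (by simpa using hv0) habs, habs⟩

lemma lt_maxEig_of_forall_lt_mulVec_one [Nonempty ι] (hA : A.IsHermitian) {r : ℝ}
    (hr : ∀ i, r < (A *ᵥ 1) i) : r < maxEig A := by
  have hcard : (0 : ℝ) < Fintype.card ι := by exact_mod_cast Fintype.card_pos
  refine lt_of_mul_lt_mul_right ?_ hcard.le
  calc r * Fintype.card ι = ∑ _i : ι, r := by simp [mul_comm]
    _ < ∑ i, (A *ᵥ 1) i := Finset.sum_lt_sum_of_nonempty Finset.univ_nonempty fun i _ => hr i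
    _ = 1 ⬝ᵥ A *ᵥ 1 := (one_dotProduct _).symm
    _ ≤ maxEig A * ((1 : ι → ℝ) ⬝ᵥ 1) := dotProduct_mulVec_le_maxEig_mul hA 1
    _ = maxEig A * Fintype.card ι := by simp

end Perron

/-! ### Two cliques joined by a core -/

/-- Distance matrix of a graph made of a clique on `α`, a core on `ι` with distance matrix `D`, and
a clique on `β`: a core vertex `i` has distance `u i` to `α` and `w i` to `β`, and the two cliques
are at distance `c`. It models `cliquePathD` with the path replaced by an arbitrary core. -/
def twoCliqueD (α β : Type*) {ι : Type*} [DecidableEq α] [DecidableEq β] (D : Matrix ι ι ℝ)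
    (u w : ι → ℝ) (c : ℝ) : Matrix (α ⊕ ι ⊕ β) (α ⊕ ι ⊕ β) ℝ :=
  fromBlocks (of fun i j => if i = j then 0 else 1) (of fun _ => Sum.elim u fun _ => c)
    (of fun i _ => Sum.elim u (fun _ => c) i)
    (fromBlocks D (of fun i _ => w i) (of fun _ j => w j) (of fun i j => if i = j then 0 else 1))

/-- The vector with value `a` on the clique `α`, `y` on the core and `b` on the clique `β`. -/
def blockVec (α β : Type*) {ι : Type*} (a : ℝ) (y : ι → ℝ) (b : ℝ) : α ⊕ ι ⊕ β → ℝ :=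
  Sum.elim (fun _ => a) (Sum.elim y fun _ => b)

lemma blockVec_dotProduct_blockVec {ι α β : Type*} [Fintype ι] [Fintype α] [Fintype β]
    (a a' b b' : ℝ) (y y' : ι → ℝ) :
    blockVec α β a y b ⬝ᵥ blockVec α β a' y' b' =
      Fintype.card α * (a * a') + y ⬝ᵥ y' + Fintype.card β * (b * b') := by
  simp [blockVec, dotProduct, add_assoc]

/-- The eigenvector equations of `twoCliqueD α β D u w c` for the eigenvalue `μ`, with the sizes
of the cliques eliminated: `s` and `t` are the sums of the eigenvector over the two cliques, `a` and
`b` its values there, and `y` its restriction to the core. -/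
structure ReducedEigenEq {ι : Type*} [Fintype ι] (D : Matrix ι ι ℝ) (u w : ι → ℝ) (c μ s t : ℝ)
    (y : ι → ℝ) (a b : ℝ) : Prop where
  core : D *ᵥ y + s • u + t • w = μ • y
  left : s + u ⬝ᵥ y + c * t = (μ + 1) * a
  right : c * s + w ⬝ᵥ y + t = (μ + 1) * b

/-- A core with a mirror symmetry `σ` exchanging its two ends, whose distance matrix is of negative
type, that is, nonpositive on vectors with sum zero. -/
structure IsMirrorCore {ι : Type*} [Fintype ι] (D : Matrix ι ι ℝ) (u w : ι → ℝ) (c : ℝ)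
    (σ : Equiv.Perm ι) : Prop where
  isHermitian : D.IsHermitian
  pos : ∀ i j, i ≠ j → 0 < D i j
  u_pos : ∀ i, 0 < u i
  abs_sub_le : ∀ i j, |u i - u j| ≤ D i j
  one_lt : 1 < c
  abs_sub_le_sub_one : ∀ i, |u i - w i| ≤ c - 1
  submatrix_eq : D.submatrix σ σ = D
  u_comp : u ∘ σ = w
  w_comp : w ∘ σ = u
  dotProduct_mulVec_nonpos : ∀ e : ι → ℝ, ∑ i, e i = 0 → e ⬝ᵥ D *ᵥ e ≤ 0

section TwoClique

variable {ι α β : Type*} [DecidableEq α] [DecidableEq β] {D : Matrix ι ι ℝ} {u w : ι → ℝ} {c : ℝ}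

lemma twoCliqueD_isHermitian (hD : D.IsHermitian) : (twoCliqueD α β D u w c).IsHermitian := by
  refine IsHermitian.ext ?_
  have hsymm (i j) : D j i = D i j := hD.apply i j
  rintro (i | i | i) (j | j | j) <;> simp [twoCliqueD, eq_comm, hsymm]

lemma twoCliqueD_nonneg (hD : ∀ i j, 0 ≤ D i j) (hu : ∀ i, 0 ≤ u i) (hw : ∀ i, 0 ≤ w i)
    (hc : 0 ≤ c) (x y) : 0 ≤ twoCliqueD α β D u w c x y := by
  rcases x with i | i | i <;> rcases y with j | j | j <;>
    simp [twoCliqueD, hD, hu, hw, hc, ite_nonneg]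

lemma twoCliqueD_pos (hD : ∀ i j, i ≠ j → 0 < D i j) (hu : ∀ i, 0 < u i) (hw : ∀ i, 0 < w i)
    (hc : 0 < c) (x y) (hxy : x ≠ y) : 0 < twoCliqueD α β D u w c x y := by
  rcases x with i | i | i <;> rcases y with j | j | j <;> simp_all [twoCliqueD]

lemma sum_ite_eq_zero_one_mul {κ : Type*} [Fintype κ] [DecidableEq κ] (i : κ) (v : κ → ℝ) :
    ∑ j, (if i = j then 0 else 1) * v j = ∑ j, v j - v i := by
  rw [eq_sub_iff_add_eq, ← Finset.add_sum_erase _ v (Finset.mem_univ i), add_comm]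
  simp [ite_mul, Finset.sum_ite, Finset.filter_ne]

variable [Fintype ι] [Fintype α] [Fintype β]

lemma twoCliqueD_mulVec_left (v) (i : α) : (twoCliqueD α β D u w c *ᵥ v) (.inl i) =
    ∑ j, v (.inl j) - v (.inl i) + u ⬝ᵥ (fun j => v (.inr (.inl j)))
      + c * ∑ j, v (.inr (.inr j)) := by
  rw [← sum_ite_eq_zero_one_mul i fun j => v (.inl j), Finset.mul_sum, add_assoc]
  simp [twoCliqueD, mulVec, dotProduct]

lemma twoCliqueD_mulVec_core (v) (i : ι) : (twoCliqueD α β D u w c *ᵥ v) (.inr (.inl i)) =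
    (D *ᵥ fun j => v (.inr (.inl j))) i + (∑ j, v (.inl j)) * u i
      + (∑ j, v (.inr (.inr j))) * w i := by
  simp only [twoCliqueD, mulVec, dotProduct, Fintype.sum_sum_type, Finset.sum_mul,
    fromBlocks_apply₁₁, fromBlocks_apply₁₂, fromBlocks_apply₂₁, fromBlocks_apply₂₂, of_apply,
    Sum.elim_inl, mul_comm (u i), mul_comm (w i)]
  ring

lemma twoCliqueD_mulVec_right (v) (i : β) : (twoCliqueD α β D u w c *ᵥ v) (.inr (.inr i)) =
    c * ∑ j, v (.inl j) + w ⬝ᵥ (fun j => v (.inr (.inl j)))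
      + (∑ j, v (.inr (.inr j)) - v (.inr (.inr i))) := by
  rw [← sum_ite_eq_zero_one_mul i fun j => v (.inr (.inr j)), Finset.mul_sum, add_assoc]
  simp [twoCliqueD, mulVec, dotProduct]

lemma twoCliqueD_mulVec_blockVec (a b : ℝ) (y : ι → ℝ) :
    twoCliqueD α β D u w c *ᵥ blockVec α β a y b =
      blockVec α β (Fintype.card α * a - a + u ⬝ᵥ y + c * (Fintype.card β * b))
        (D *ᵥ y + (Fintype.card α * a) • u + (Fintype.card β * b) • w)
        (c * (Fintype.card α * a) + w ⬝ᵥ y + (Fintype.card β * b - b)) := by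
  ext (i | i | i)
  · simp [twoCliqueD_mulVec_left, blockVec]
  · simp [twoCliqueD_mulVec_core, blockVec]
  · simp [twoCliqueD_mulVec_right, blockVec]

end TwoClique

namespace ReducedEigenEq

variable {ι : Type*} [Fintype ι] {D : Matrix ι ι ℝ} {u w : ι → ℝ} {c μ : ℝ}
  {s t a b s' t' a' b' : ℝ} {y y' : ι → ℝ}

lemma add (h : ReducedEigenEq D u w c μ s t y a b)
    (h' : ReducedEigenEq D u w c μ s' t' y' a' b') :
    ReducedEigenEq D u w c μ (s + s') (t + t') (y + y') (a + a') (b + b') where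
  core := by rw [smul_add, ← h.core, ← h'.core, mulVec_add]; module
  left := by rw [dotProduct_add]; linear_combination h.left + h'.left
  right := by rw [dotProduct_add]; linear_combination h.right + h'.right

lemma smul (g : ℝ) (h : ReducedEigenEq D u w c μ s t y a b) :
    ReducedEigenEq D u w c μ (g * s) (g * t) (g • y) (g * a) (g * b) where
  core := by rw [smul_comm, ← h.core, mulVec_smul]; module
  left := by rw [dotProduct_smul, smul_eq_mul]; linear_combination g * h.left
  right := by rw [dotProduct_smul, smul_eq_mul]; linear_combination g * h.right

lemma sub (h : ReducedEigenEq D u w c μ s t y a b)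
    (h' : ReducedEigenEq D u w c μ s' t' y' a' b') :
    ReducedEigenEq D u w c μ (s - s') (t - t') (y - y') (a - a') (b - b') := by
  simpa [sub_eq_add_neg] using h.add (h'.smul (-1))

lemma mirror {σ : Equiv.Perm ι} (hD : D.submatrix σ σ = D) (hu : u ∘ σ = w) (hw : w ∘ σ = u)
    (h : ReducedEigenEq D u w c μ s t y a b) :
    ReducedEigenEq D u w c μ t s (y ∘ σ) b a where
  core := by
    have hDy : D *ᵥ (y ∘ σ) = (D *ᵥ y) ∘ σ := by
      conv_lhs => rw [← hD, submatrix_mulVec_equiv]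
      simp [Function.comp_assoc]
    funext i
    have hi := congrFun h.core (σ i)
    have hui : u (σ i) = w i := congrFun hu i
    have hwi : w (σ i) = u i := congrFun hw i
    simp only [Pi.add_apply, Pi.smul_apply, smul_eq_mul, hui, hwi] at hi
    simp only [hDy, Pi.add_apply, Pi.smul_apply, smul_eq_mul, Function.comp_apply]
    linear_combination hi
  left := by
    have huy : u ⬝ᵥ y ∘ σ = w ⬝ᵥ y := by rw [← hw, comp_equiv_dotProduct_comp_equiv]
    rw [huy]
    linear_combination h.right
  right := by
    have hwy : w ⬝ᵥ y ∘ σ = u ⬝ᵥ y := by rw [← hu, comp_equiv_dotProduct_comp_equiv]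
    rw [hwy]
    linear_combination h.left

section Antisymmetric

variable {d δ : ℝ} {e : ι → ℝ}

lemma sub_dotProduct_of_antisymm (h : ReducedEigenEq D u w c μ d (-d) e δ (-δ)) :
    (u - w) ⬝ᵥ e = 2 * ((μ + 1) * δ + (c - 1) * d) := by
  rw [sub_dotProduct]
  linear_combination h.left - h.right

lemma mul_dotProduct_self_le_of_antisymm (he : e ⬝ᵥ D *ᵥ e ≤ 0)
    (h : ReducedEigenEq D u w c μ d (-d) e δ (-δ)) :
    μ * (e ⬝ᵥ e) ≤ d * ((u - w) ⬝ᵥ e) := by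
  have hcore := congrArg (e ⬝ᵥ ·) h.core
  simp only [dotProduct_add, dotProduct_smul, smul_eq_mul, dotProduct_comm e u,
    dotProduct_comm e w] at hcore
  rw [sub_dotProduct]
  linarith

lemma mul_neg_of_antisymm (he : e ⬝ᵥ D *ᵥ e ≤ 0) (hμ : 0 < μ)
    (huw : (u - w) ⬝ᵥ (u - w) < 2 * (c - 1) * μ)
    (h : ReducedEigenEq D u w c μ d (-d) e δ (-δ)) (hd : d ≠ 0) : d * δ < 0 := by
  have hself := h.mul_dotProduct_self_le_of_antisymm he
  have huwe := h.sub_dotProduct_of_antisymm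
  -- Young: `0 ≤ |μ e - d (u - w)|²` turns the energy bound into one on `d ((u - w) ⬝ e)` alone.
  have hyoung := two_mul_dotProduct_le (d • (u - w)) (μ • e)
  have hd2 : 0 < d ^ 2 := by positivity
  simp only [smul_dotProduct, dotProduct_smul, smul_eq_mul] at hyoung
  have hle : μ * (d * ((u - w) ⬝ᵥ e)) ≤ d ^ 2 * ((u - w) ⬝ᵥ (u - w)) := by
    linarith [mul_le_mul_of_nonneg_left hself hμ.le]
  have hlt : μ * (d * ((u - w) ⬝ᵥ e)) < μ * (2 * (c - 1) * d ^ 2) := by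
    linarith [mul_lt_mul_of_pos_left huw hd2]
  have hmain := lt_of_mul_lt_mul_left hlt hμ.le
  rw [huwe] at hmain
  refine neg_of_mul_neg_right ?_ (by linarith : 0 ≤ μ + 1)
  linarith

lemma eq_zero_of_antisymm (he : e ⬝ᵥ D *ᵥ e ≤ 0) (hμ : 0 < μ)
    (h : ReducedEigenEq D u w c μ 0 (-0) e δ (-δ)) : δ = 0 := by
  have hself : μ * (e ⬝ᵥ e) ≤ 0 := by simpa using h.mul_dotProduct_self_le_of_antisymm he
  have hnorm : 0 ≤ e ⬝ᵥ e := dotProduct_self_star_nonneg e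
  have he0 : e = 0 :=
    dotProduct_self_eq_zero.1 ((nonpos_of_mul_nonpos_right hself hμ).antisymm hnorm)
  have huwe := h.sub_dotProduct_of_antisymm
  rw [he0, dotProduct_zero] at huwe
  exact (mul_eq_zero.1 (by linarith : (μ + 1) * δ = 0)).resolve_left (by linarith)

end Antisymmetric

end ReducedEigenEq

section Rayleigh

variable {ι α β : Type} [Fintype ι] [Fintype α] [Fintype β] [DecidableEq α] [DecidableEq β]
  [Nonempty α] [Nonempty β] {D : Matrix ι ι ℝ} {u w : ι → ℝ} {c μ : ℝ}

lemma eq_blockVec_of_mulVec_eq_smul (hμ : μ + 1 ≠ 0) {v : α ⊕ ι ⊕ β → ℝ}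
    (hv : twoCliqueD α β D u w c *ᵥ v = μ • v) : ∃ a y b, v = blockVec α β a y b := by
  have hleft (i j : α) : v (.inl i) = v (.inl j) := by
    have hi := congrFun hv (.inl i)
    have hj := congrFun hv (.inl j)
    rw [twoCliqueD_mulVec_left, Pi.smul_apply, smul_eq_mul] at hi hj
    exact mul_left_cancel₀ hμ (by linarith)
  have hright (i j : β) : v (.inr (.inr i)) = v (.inr (.inr j)) := by
    have hi := congrFun hv (.inr (.inr i))
    have hj := congrFun hv (.inr (.inr j))
    rw [twoCliqueD_mulVec_right, Pi.smul_apply, smul_eq_mul] at hi hj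
    exact mul_left_cancel₀ hμ (by linarith)
  refine ⟨v (.inl (Classical.arbitrary α)), fun i => v (.inr (.inl i)),
    v (.inr (.inr (Classical.arbitrary β))), funext ?_⟩
  rintro (i | i | i)
  exacts [hleft i _, rfl, hright i _]

lemma reducedEigenEq_of_mulVec_blockVec_eq_smul {a b : ℝ} {y : ι → ℝ}
    (h : twoCliqueD α β D u w c *ᵥ blockVec α β a y b = μ • blockVec α β a y b) :
    ReducedEigenEq D u w c μ (Fintype.card α * a) (Fintype.card β * b) y a b := by
  rw [twoCliqueD_mulVec_blockVec] at h
  have hleft := congrFun h (.inl (Classical.arbitrary α))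
  have hright := congrFun h (.inr (.inr (Classical.arbitrary β)))
  simp only [blockVec, Sum.elim_inl, Sum.elim_inr, Pi.smul_apply, smul_eq_mul] at hleft hright
  exact ⟨funext fun i => congrFun h (.inr (.inl i)), by linarith, by linarith⟩

lemma exists_pos_reducedEigenEq (hD : D.IsHermitian) (hnonneg : ∀ i j, 0 ≤ D i j)
    (hpos : ∀ i j, i ≠ j → 0 < D i j) (hu : ∀ i, 0 < u i) (hw : ∀ i, 0 < w i) (hc : 0 < c)
    (hμ : maxEig (twoCliqueD α β D u w c) + 1 ≠ 0) :
    ∃ a > 0, ∃ b > 0, ∃ y, ReducedEigenEq D u w c (maxEig (twoCliqueD α β D u w c))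
      (Fintype.card α * a) (Fintype.card β * b) y a b := by
  obtain ⟨v, hv0, hv⟩ := exists_pos_mulVec_eq_maxEig_smul
    (twoCliqueD_isHermitian (α := α) (β := β) (u := u) (w := w) (c := c) hD)
    (twoCliqueD_nonneg hnonneg (fun i => (hu i).le) (fun i => (hw i).le) hc.le)
    (twoCliqueD_pos hpos hu hw hc)
  obtain ⟨a, y, b, rfl⟩ := eq_blockVec_of_mulVec_eq_smul hμ hv
  exact ⟨a, hv0 (.inl (Classical.arbitrary α)), b, hv0 (.inr (.inr (Classical.arbitrary β))), y,
    reducedEigenEq_of_mulVec_blockVec_eq_smul hv⟩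

lemma ReducedEigenEq.mul_add_mul_le_of_maxEig_le {s t a b : ℝ} {y : ι → ℝ} (hD : D.IsHermitian)
    (h : ReducedEigenEq D u w c μ s t y a b) (hpos : 0 < μ + 1)
    (hμ : maxEig (twoCliqueD α β D u w c) ≤ μ) :
    s * a + t * b ≤ s ^ 2 / Fintype.card α + t ^ 2 / Fintype.card β := by
  set p : ℝ := (Fintype.card α : ℝ) with hp
  set q : ℝ := (Fintype.card β : ℝ) with hq
  have hp0 : p ≠ 0 := Nat.cast_ne_zero.2 Fintype.card_ne_zero
  have hq0 : q ≠ 0 := Nat.cast_ne_zero.2 Fintype.card_ne_zero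
  have hs : p * (s / p) = s := mul_div_cancel₀ s hp0
  have ht : q * (t / q) = t := mul_div_cancel₀ t hq0
  let v := blockVec α β (s / p) y (t / q)
  have hmul : twoCliqueD α β D u w c *ᵥ v =
      blockVec α β ((μ + 1) * a - s / p) (μ • y) ((μ + 1) * b - t / q) := by
    rw [twoCliqueD_mulVec_blockVec, ← hp, ← hq, hs, ht, h.core, ← h.left, ← h.right]
    congr 1 <;> ring
  have hray : v ⬝ᵥ twoCliqueD α β D u w c *ᵥ v ≤ μ * (v ⬝ᵥ v) :=
    (dotProduct_mulVec_le_maxEig_mul (twoCliqueD_isHermitian hD) v).trans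
      (mul_le_mul_of_nonneg_right hμ (dotProduct_self_star_nonneg v))
  rw [hmul, blockVec_dotProduct_blockVec, blockVec_dotProduct_blockVec, dotProduct_smul,
    smul_eq_mul, ← hp, ← hq] at hray
  refine le_of_mul_le_mul_left ?_ hpos
  linear_combination hray + ((s / p - (μ + 1) * a) + μ * (s / p)) * hs
    + ((t / q - (μ + 1) * b) + μ * (t / q)) * ht

end Rayleigh

section Comparison

-- The hypothesis is the Rayleigh bound for clique sizes `p'`, `q'` at `g` times the reduced
-- eigenvector for the sizes `p`, `q` plus its mirror image.
lemma sq_sub_sq_mul_nonneg_of_forall_le {p q p' q' a b : ℝ} (hp' : 0 < p') (hq' : 0 < q')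
    (hsum : p + q = p' + q')
    (h : ∀ g : ℝ, (g * (p * a) + q * b) * (g * a + b) + (g * (q * b) + p * a) * (g * b + a) ≤
      (g * (p * a) + q * b) ^ 2 / p' + (g * (q * b) + p * a) ^ 2 / q') :
    0 ≤ ((p * a) ^ 2 - (q * b) ^ 2) * (a ^ 2 - b ^ 2) * (p' * q' - p * q) := by
  set s := p * a
  set t := q * b
  have hdiscrim : discrim (s ^ 2 / p' + t ^ 2 / q' - (s * a + t * b))
      (2 * (s * t / p' + s * t / q' - (s * b + t * a)))
      (t ^ 2 / p' + s ^ 2 / q' - (s * a + t * b)) ≤ 0 :=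
    discrim_le_zero fun g => by linear_combination h g
  have heq : discrim (s ^ 2 / p' + t ^ 2 / q' - (s * a + t * b))
      (2 * (s * t / p' + s * t / q' - (s * b + t * a)))
      (t ^ 2 / p' + s ^ 2 / q' - (s * a + t * b)) =
      -(4 / (p' * q')) * ((s ^ 2 - t ^ 2) * (a ^ 2 - b ^ 2) * (p' * q' - p * q)) := by
    obtain rfl : p = p' + q' - q := by linarith
    simp only [s, t, discrim]
    field_simp
    ring
  have hpos : 0 < 4 / (p' * q') := by positivity
  rw [heq] at hdiscrim
  exact nonneg_of_mul_nonneg_right (by linarith) hpos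

variable {ι α β α' β' : Type} [Fintype ι] [Fintype α] [Fintype β] [Fintype α'] [Fintype β']
  [DecidableEq α] [DecidableEq β] [DecidableEq α'] [DecidableEq β']
  {D : Matrix ι ι ℝ} {u w : ι → ℝ} {c μ : ℝ} {σ : Equiv.Perm ι}

namespace IsMirrorCore

lemma nonneg (h : IsMirrorCore D u w c σ) (i j : ι) : 0 ≤ D i j :=
  (abs_nonneg _).trans (h.abs_sub_le i j)

lemma w_pos (h : IsMirrorCore D u w c σ) (i : ι) : 0 < w i := by
  rw [← h.u_comp]
  exact h.u_pos (σ i)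

lemma sum_w (h : IsMirrorCore D u w c σ) : ∑ i, w i = ∑ i, u i := by
  rw [← h.u_comp]
  exact Equiv.sum_comp σ u

lemma sum_abs_sub_le_two_mul_sum (h : IsMirrorCore D u w c σ) :
    ∑ i, |u i - w i| ≤ 2 * ∑ i, u i := by
  calc ∑ i, |u i - w i| ≤ ∑ i, (u i + w i) := Finset.sum_le_sum fun i _ => by
        rw [abs_le]
        constructor <;> linarith [h.u_pos i, h.w_pos i]
    _ = 2 * ∑ i, u i := by rw [Finset.sum_add_distrib, h.sum_w, two_mul]

lemma sum_abs_sub_le_two_mul_sum_row (h : IsMirrorCore D u w c σ) (i : ι) :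
    ∑ j, |u j - w j| ≤ 2 * ∑ j, D i j := by
  calc ∑ j, |u j - w j| ≤ ∑ j, (D i j + D i (σ j)) := Finset.sum_le_sum fun j _ => by
        rw [← h.u_comp, Function.comp_apply, ← sub_sub_sub_cancel_left _ _ (u i), add_comm]
        exact (abs_sub _ _).trans (add_le_add (h.abs_sub_le i (σ j)) (h.abs_sub_le i j))
    _ = 2 * ∑ j, D i j := by rw [Finset.sum_add_distrib, Equiv.sum_comp σ (D i), two_mul]

lemma half_sum_abs_sub_lt_maxEig [Nonempty α] [Nonempty β] (h : IsMirrorCore D u w c σ) :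
    (∑ i, |u i - w i|) / 2 < maxEig (twoCliqueD α β D u w c) := by
  have hα : (1 : ℝ) ≤ Fintype.card α := by exact_mod_cast Fintype.card_pos
  have hβ : (1 : ℝ) ≤ Fintype.card β := by exact_mod_cast Fintype.card_pos
  have hu := h.sum_abs_sub_le_two_mul_sum
  have hc := h.one_lt
  refine lt_maxEig_of_forall_lt_mulVec_one (twoCliqueD_isHermitian h.isHermitian) ?_
  rintro (i | i | i)
  · simp only [twoCliqueD_mulVec_left, dotProduct, Pi.one_apply, mul_one, Finset.sum_const,
      Finset.card_univ, nsmul_eq_mul]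
    nlinarith
  · have hD := h.sum_abs_sub_le_two_mul_sum_row i
    rw [twoCliqueD_mulVec_core]
    simp only [mulVec, dotProduct, Pi.one_apply, mul_one, Finset.sum_const, Finset.card_univ,
      nsmul_eq_mul]
    have hui := h.u_pos i
    have hwi := h.w_pos i
    nlinarith
  · simp only [twoCliqueD_mulVec_right, dotProduct, Pi.one_apply, mul_one, Finset.sum_const,
      Finset.card_univ, nsmul_eq_mul, h.sum_w]
    nlinarith

lemma maxEig_pos [Nonempty α] [Nonempty β] (h : IsMirrorCore D u w c σ) :
    0 < maxEig (twoCliqueD α β D u w c) :=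
  lt_of_le_of_lt (by positivity) h.half_sum_abs_sub_lt_maxEig

lemma dotProduct_sub_self_lt (h : IsMirrorCore D u w c σ)
    (hμ : (∑ i, |u i - w i|) / 2 < μ) : (u - w) ⬝ᵥ (u - w) < 2 * (c - 1) * μ := by
  have hc : 0 < c - 1 := sub_pos.2 h.one_lt
  calc (u - w) ⬝ᵥ (u - w) = ∑ i, |u i - w i| * |u i - w i| := by simp [dotProduct]
    _ ≤ ∑ i, (c - 1) * |u i - w i| := Finset.sum_le_sum fun i _ =>
        mul_le_mul_of_nonneg_right (h.abs_sub_le_sub_one i) (abs_nonneg _)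
    _ = 2 * (c - 1) * ((∑ i, |u i - w i|) / 2) := by rw [← Finset.mul_sum]; ring
    _ < 2 * (c - 1) * μ := mul_lt_mul_of_pos_left hμ (by positivity)

lemma sub_mul_sub_neg {s t a b : ℝ} {y : ι → ℝ} (h : IsMirrorCore D u w c σ)
    (hμ : (∑ i, |u i - w i|) / 2 < μ) (heq : ReducedEigenEq D u w c μ s t y a b)
    (hst : s = t → a ≠ b) : (s - t) * (a - b) < 0 := by
  have hμ0 : 0 < μ := lt_of_le_of_lt (by positivity) hμ
  have hsum : ∑ i, (y - y ∘ σ) i = 0 := by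
    simp [Finset.sum_sub_distrib, Equiv.sum_comp σ y]
  have hneg := h.dotProduct_mulVec_nonpos _ hsum
  have hanti : ReducedEigenEq D u w c μ (s - t) (-(s - t)) (y - y ∘ σ) (a - b) (-(a - b)) := by
    simpa using heq.sub (heq.mirror h.submatrix_eq h.u_comp h.w_comp)
  refine hanti.mul_neg_of_antisymm hneg hμ0 (h.dotProduct_sub_self_lt hμ) fun hst0 => ?_
  rw [hst0] at hanti
  exact hst (sub_eq_zero.1 hst0) (sub_eq_zero.1 (hanti.eq_zero_of_antisymm hneg hμ0))

lemma exists_pos_reducedEigenEq_sub_mul_sub_neg [Nonempty α] [Nonempty β]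
    (h : IsMirrorCore D u w c σ) (hcard : Fintype.card α ≠ Fintype.card β) :
    ∃ a > 0, ∃ b > 0, ∃ y, ReducedEigenEq D u w c (maxEig (twoCliqueD α β D u w c))
      (Fintype.card α * a) (Fintype.card β * b) y a b ∧
      (Fintype.card α * a - Fintype.card β * b) * (a - b) < 0 := by
  have hμ := h.half_sum_abs_sub_lt_maxEig (α := α) (β := β)
  have hμ0 := h.maxEig_pos (α := α) (β := β)
  obtain ⟨a, ha, b, hb, y, heq⟩ := exists_pos_reducedEigenEq (α := α) (β := β) h.isHermitian
    h.nonneg h.pos h.u_pos h.w_pos (zero_lt_one.trans h.one_lt) (by positivity)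
  refine ⟨a, ha, b, hb, y, heq, h.sub_mul_sub_neg hμ heq ?_⟩
  rintro hab rfl
  exact hcard (by exact_mod_cast mul_right_cancel₀ ha.ne' hab)

end IsMirrorCore

theorem maxEig_cliquePathD_strict_mono_general [Nonempty α] [Nonempty β]
    (h : IsMirrorCore D u w c σ)
    (hsum : Fintype.card α + Fintype.card β = Fintype.card α' + Fintype.card β')
    (hmul : Fintype.card α * Fintype.card β < Fintype.card α' * Fintype.card β') :
    maxEig (twoCliqueD α β D u w c) < maxEig (twoCliqueD α' β' D u w c) := by
  by_contra! hle
  have : Nonempty α' := Fintype.card_pos_iff.1 (Nat.pos_of_mul_pos_right (Nat.zero_lt_of_lt hmul))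
  have : Nonempty β' := Fintype.card_pos_iff.1 (Nat.pos_of_mul_pos_left (Nat.zero_lt_of_lt hmul))
  have hcard : Fintype.card α ≠ Fintype.card β := by
    intro hcard
    nlinarith [sq_nonneg ((Fintype.card α' : ℤ) - Fintype.card β')]
  obtain ⟨a, ha, b, hb, y, heq, hneg⟩ := h.exists_pos_reducedEigenEq_sub_mul_sub_neg hcard
  have hμ0 := h.maxEig_pos (α := α) (β := β)
  have hdiscrim := sq_sub_sq_mul_nonneg_of_forall_le (p := Fintype.card α) (q := Fintype.card β)
    (p' := Fintype.card α') (q' := Fintype.card β') (a := a) (b := b)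
    (by exact_mod_cast Fintype.card_pos) (by exact_mod_cast Fintype.card_pos)
    (by exact_mod_cast hsum) fun g =>
      ((heq.smul g).add (heq.mirror h.submatrix_eq h.u_comp h.w_comp)).mul_add_mul_le_of_maxEig_le
        h.isHermitian (by positivity) hle
  have hmul' : (Fintype.card α : ℝ) * Fintype.card β < Fintype.card α' * Fintype.card β' := by
    exact_mod_cast hmul
  refine hdiscrim.not_gt (mul_neg_of_neg_of_pos ?_ (sub_pos.2 hmul'))
  calc ((Fintype.card α * a) ^ 2 - (Fintype.card β * b) ^ 2) * (a ^ 2 - b ^ 2)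
      = (Fintype.card α * a - Fintype.card β * b) * (a - b)
        * ((Fintype.card α * a + Fintype.card β * b) * (a + b)) := by ring
    _ < 0 := mul_neg_of_neg_of_pos hneg (by positivity)

end Comparison

/-! ### Clique paths -/

section Path

lemma dotProduct_sq_sub_mulVec {ι : Type*} [Fintype ι] (x : ι → ℝ) {e : ι → ℝ}
    (he : ∑ i, e i = 0) :
    e ⬝ᵥ (of fun i j => (x i - x j) ^ 2) *ᵥ e = -2 * (∑ i, e i * x i) ^ 2 := by
  have hexpand (i j : ι) : e i * ((x i - x j) ^ 2 * e j) =
      e i * x i ^ 2 * e j + e i * (e j * x j ^ 2) - 2 * (e i * x i * (e j * x j)) := by ring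
  simp only [dotProduct, mulVec, of_apply, Finset.mul_sum, hexpand]
  simp only [Finset.sum_add_distrib, Finset.sum_sub_distrib, ← Finset.mul_sum, ← Finset.sum_mul, he]
  ring

lemma dotProduct_sum_sq_sub_mulVec_nonpos {ι κ : Type*} [Fintype ι] [Fintype κ] (x : κ → ι → ℝ)
    {e : ι → ℝ} (he : ∑ i, e i = 0) :
    e ⬝ᵥ (∑ t, of fun i j => (x t i - x t j) ^ 2) *ᵥ e ≤ 0 := by
  simp only [sum_mulVec, dotProduct_sum, dotProduct_sq_sub_mulVec _ he]
  exact Finset.sum_nonpos fun t _ => by nlinarith [sq_nonneg (∑ i, e i * x t i)]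

lemma pathD_eq_sum_sq_sub (m : ℕ) : pathD m =
    ∑ t : Fin m, of fun i j => ((if t < i then 1 else 0) - (if t < j then 1 else 0)) ^ 2 := by
  have hcard (i : Fin m) : ∑ t, (if t < i then 1 else 0 : ℝ) = i := by
    rw [Finset.sum_boole, Finset.filter_gt_eq_Iio, Fin.card_Iio]
  ext i j
  have hterm (t : Fin m) : ((if t < i then 1 else 0) - (if t < j then 1 else 0) : ℝ) ^ 2 =
      (if t < i then 1 else 0) + (if t < j then 1 else 0) - 2 * if t < min i j then 1 else 0 := by
    by_cases hi : t < i <;> by_cases hj : t < j <;> norm_num [hi, hj]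
  simp only [Matrix.sum_apply, of_apply, hterm, Finset.sum_sub_distrib, Finset.sum_add_distrib,
    ← Finset.mul_sum, hcard]
  rcases le_total i j with hij | hij
  · have hij' : (i : ℝ) ≤ j := by exact_mod_cast hij
    rw [pathD, min_eq_left hij, abs_of_nonpos (sub_nonpos.2 hij')]
    ring
  · have hij' : (j : ℝ) ≤ i := by exact_mod_cast hij
    rw [pathD, min_eq_right hij, abs_of_nonneg (sub_nonneg.2 hij')]
    ring

lemma cast_rev {m : ℕ} (i : Fin m) : ((Fin.rev i : ℕ) : ℝ) = m - 1 - i := by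
  rw [Fin.val_rev, Nat.cast_sub i.is_lt]
  push_cast
  ring

lemma isMirrorCore_pathD {m : ℕ} {c : ℝ} (hc : 1 < c) (hm : m ≤ c) :
    IsMirrorCore (pathD m) (uVec m) (wVec m) c Fin.revPerm where
  isHermitian := IsHermitian.ext fun i j => by simp [pathD, abs_sub_comm]
  pos i j hij := abs_pos.2 (sub_ne_zero.2 (by simpa [Fin.val_inj] using hij))
  u_pos i := by
    rw [uVec]
    positivity
  abs_sub_le i j := by simp [uVec, pathD]
  one_lt := hc
  abs_sub_le_sub_one i := by
    have hi : (i : ℝ) + 1 ≤ m := by exact_mod_cast i.is_lt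
    rw [uVec, wVec, abs_le]
    constructor <;> linarith [(i : ℕ).cast_nonneg (α := ℝ)]
  submatrix_eq := by
    ext i j
    simp only [submatrix_apply, Fin.revPerm_apply, pathD, cast_rev]
    rw [sub_sub_sub_cancel_left, abs_sub_comm]
  u_comp := by
    ext i
    simp only [uVec, wVec, Function.comp_apply, Fin.revPerm_apply, cast_rev]
    ring
  w_comp := by
    ext i
    simp only [uVec, wVec, Function.comp_apply, Fin.revPerm_apply, cast_rev]
    ring
  dotProduct_mulVec_nonpos e he := by
    rw [pathD_eq_sum_sq_sub]
    exact dotProduct_sum_sq_sub_mulVec_nonpos _ he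

lemma cliquePathD_eq_twoCliqueD (p k q : ℕ) : cliquePathD p k q =
    twoCliqueD (Fin p) (Fin q) (pathD (k - 1)) (uVec (k - 1)) (wVec (k - 1)) k := by
  ext (i | i | i) (j | j | j) <;> rfl

lemma mul_lt_mul_of_max_lt_max {a b a' b' : ℕ} (hsum : a + b = a' + b')
    (hmax : max a b < max a' b') : a' * b' < a * b := by
  zify at *
  rcases max_lt_iff.1 hmax with ⟨ha, hb⟩
  rcases lt_max_iff.1 ha with h | h <;> rcases lt_max_iff.1 hb with h' | h' <;> nlinarith

end Path

/-- Among clique paths `ℙ_{n1+1,2,…,2,n2+1}` with `k` cliques and fixed `n1 + n2`,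
making the two end cliques more balanced strictly increases the distance spectral radius. -/
theorem maxEig_cliquePathD_strict_mono
    (k n1 n2 n1' n2' : ℕ) (hk : 2 ≤ k)
    (hn1 : 1 ≤ n1) (hn2 : 1 ≤ n2) (hn1' : 1 ≤ n1') (hn2' : 1 ≤ n2')
    (hsum : n1 + n2 = n1' + n2') (hmax : max n1 n2 < max n1' n2') :
    maxEig (cliquePathD n1' k n2') < maxEig (cliquePathD n1 k n2) := by
  have : Nonempty (Fin n1') := Fin.pos_iff_nonempty.1 hn1'
  have : Nonempty (Fin n2') := Fin.pos_iff_nonempty.1 hn2'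
  simp only [cliquePathD_eq_twoCliqueD]
  refine maxEig_cliquePathD_strict_mono_general
    (isMirrorCore_pathD (by exact_mod_cast hk) (by exact_mod_cast k.sub_le 1)) ?_ ?_
  · simpa only [Fintype.card_fin] using hsum.symm
  · simpa only [Fintype.card_fin] using mul_lt_mul_of_max_lt_max hsum hmax
end
end

section
/- Let k ≥ 2 and n1, n2 ≥ 1, and let λ_1 ≥ λ_2 ≥ … ≥ λ_n (with n = n1+k−1+n2) be the eigenvalues of D(n1,k,n2), counted with multiplicity. Then the distance energy Σ_{i=1}^{n} |λ_i| equals 2·λ_1, twice the largest eigenvalue of D(n1,k,n2). -/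
open Matrix

noncomputable section

/-!
Up to pendant lengths, a clique path is a set of points on a line: put path vertex `j` at `j`, and
hang each remaining vertex by an edge of length `1/2` on the midpoint of its clique. So the distance
matrix is `|pᵢ - pⱼ|` plus the distance matrix of a star. Both summands are nonpositive quadratic
forms on the hyperplane `∑ xᵢ = 0`: the first because `|s - t|` is the squared `L²` distance between
the indicators of the intervals from `0` to `s` and to `t`, the second because there it is
`-2 ∑ cᵢ xᵢ²`. A form that is nonpositive on a hyperplane has at most one positive eigenvalue, and
when the trace vanishes that eigenvalue balances all the others.
-/

open MeasureTheory
open scoped symmDiff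

section Spectrum

variable {ι : Type*} [Fintype ι] [DecidableEq ι] {A : Matrix ι ι ℝ}

theorem dotProduct_eigenvectorBasis (hA : A.IsHermitian) (i j : ι) :
    ⇑(hA.eigenvectorBasis i) ⬝ᵥ ⇑(hA.eigenvectorBasis j) = if i = j then 1 else 0 := by
  simpa [EuclideanSpace.inner_eq_star_dotProduct, dotProduct_comm] using
    hA.eigenvectorBasis.inner_eq_ite i j

theorem dotProduct_mulVec_smul_add_smul_eigenvectorBasis (hA : A.IsHermitian) {i j : ι}
    (hij : i ≠ j) (a b : ℝ) :
    let x : ι → ℝ := a • ⇑(hA.eigenvectorBasis i) + b • ⇑(hA.eigenvectorBasis j)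
    x ⬝ᵥ A *ᵥ x = a ^ 2 * hA.eigenvalues i + b ^ 2 * hA.eigenvalues j := by
  simp only [mulVec_add, mulVec_smul, hA.mulVec_eigenvectorBasis, add_dotProduct, dotProduct_add,
    smul_dotProduct, dotProduct_smul, dotProduct_eigenvectorBasis, hij, hij.symm, if_true, if_false,
    smul_eq_mul]
  ring

theorem eigenvalues_nonpos_or_nonpos_of_forall_dotProduct_eq_zero (hA : A.IsHermitian) {w : ι → ℝ}
    (hneg : ∀ x, w ⬝ᵥ x = 0 → x ⬝ᵥ A *ᵥ x ≤ 0) {i j : ι} (hij : i ≠ j) :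
    hA.eigenvalues i ≤ 0 ∨ hA.eigenvalues j ≤ 0 := by
  by_contra! ⟨hi, hj⟩
  have form_nonpos (a b : ℝ)
      (hab : a * (w ⬝ᵥ ⇑(hA.eigenvectorBasis i)) + b * (w ⬝ᵥ ⇑(hA.eigenvectorBasis j)) = 0) :
      a ^ 2 * hA.eigenvalues i + b ^ 2 * hA.eigenvalues j ≤ 0 := by
    rw [← dotProduct_mulVec_smul_add_smul_eigenvectorBasis hA hij]
    exact hneg _ (by simpa only [dotProduct_add, dotProduct_smul, smul_eq_mul] using hab)
  by_cases hwi : w ⬝ᵥ ⇑(hA.eigenvectorBasis i) = 0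
  · linarith [form_nonpos 1 0 (by rw [hwi]; ring)]
  · have hform := form_nonpos (w ⬝ᵥ ⇑(hA.eigenvectorBasis j)) (-(w ⬝ᵥ ⇑(hA.eigenvectorBasis i)))
      (by ring)
    have : 0 < (-(w ⬝ᵥ ⇑(hA.eigenvectorBasis i))) ^ 2 * hA.eigenvalues j :=
      mul_pos (pow_two_pos_of_ne_zero (neg_ne_zero.2 hwi)) hj
    have : 0 ≤ (w ⬝ᵥ ⇑(hA.eigenvectorBasis j)) ^ 2 * hA.eigenvalues i := by positivity
    linarith

theorem mem_spectrum_iff_exists_mulVec_eq_smul {K : Type*} [Field K] {A : Matrix ι ι K} {μ : K} :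
    μ ∈ spectrum K A ↔ ∃ v : ι → K, v ≠ 0 ∧ A *ᵥ v = μ • v := by
  rw [← Matrix.spectrum_toLin', ← Module.End.hasEigenvalue_iff_mem_spectrum]
  simp only [Module.End.hasEigenvalue_iff, Submodule.ne_bot_iff, Module.End.mem_eigenspace_iff,
    Matrix.toLin'_apply, and_comm]

theorem maxEig_eq_iSup_eigenvalues {ι : Type} [Fintype ι] [DecidableEq ι] {A : Matrix ι ι ℝ}
    (hA : A.IsHermitian) : maxEig A = ⨆ i, hA.eigenvalues i := by
  simp only [maxEig, ← mem_spectrum_iff_exists_mulVec_eq_smul, Set.ofPred_mem_eq,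
    hA.spectrum_real_eq_range_eigenvalues, iSup]

end Spectrum

theorem sum_abs_eq_two_mul_iSup {ι : Type*} [Fintype ι] [Nonempty ι] {f : ι → ℝ}
    (hsum : ∑ i, f i = 0) (hpos : ∀ i j, i ≠ j → f i ≤ 0 ∨ f j ≤ 0) :
    ∑ i, |f i| = 2 * ⨆ i, f i := by
  classical
  obtain ⟨m, hm⟩ := Finite.exists_max f
  have hsup : ⨆ i, f i = f m := le_antisymm (ciSup_le hm) (le_ciSup (Finite.bddAbove_range f) m)
  have nonpos_of_mem : ∀ i ∈ ({m}ᶜ : Finset ι), f i ≤ 0 := fun i hi =>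
    (hpos i m (by simpa using hi)).elim id (hm i).trans
  have hsplit : f m + ∑ i ∈ {m}ᶜ, f i = 0 := by rw [← Fintype.sum_eq_add_sum_compl, hsum]
  have hm_nonneg : 0 ≤ f m := by linarith [Finset.sum_nonpos nonpos_of_mem]
  calc ∑ i, |f i| = |f m| + ∑ i ∈ {m}ᶜ, |f i| := Fintype.sum_eq_add_sum_compl m _
    _ = f m + ∑ i ∈ {m}ᶜ, -f i := by
      rw [abs_of_nonneg hm_nonneg]
      exact congrArg _ (Finset.sum_congr rfl fun i hi => abs_of_nonpos (nonpos_of_mem i hi))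
    _ = 2 * ⨆ i, f i := by rw [Finset.sum_neg_distrib, hsup]; linarith

section StarDistance

variable {ι : Type*} [DecidableEq ι]

/-- The distance matrix of the leaves of a star in which the edge to leaf `i` has length `c i`. -/
def starD (c : ι → ℝ) : Matrix ι ι ℝ := of fun i j => if i = j then 0 else c i + c j

theorem starD_eq_vecMulVec_add_vecMulVec_sub (c : ι → ℝ) :
    starD c = vecMulVec c 1 + vecMulVec 1 c - (2 : ℝ) • diagonal c := by
  ext i j
  obtain rfl | hij := eq_or_ne i j
  · simp [starD, two_mul]
  · simp [starD, hij]

end StarDistance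

section CondNegSemidef

variable {ι : Type*} [Fintype ι]

/-- Conditional negative semidefiniteness: the quadratic form of `A` is nonpositive on the vectors
with coordinate sum zero. Symmetry of `A` is not part of the notion. -/
def IsCondNegSemidef (A : Matrix ι ι ℝ) : Prop :=
  ∀ x : ι → ℝ, ∑ i, x i = 0 → x ⬝ᵥ A *ᵥ x ≤ 0

theorem IsCondNegSemidef.add {A B : Matrix ι ι ℝ} (hA : IsCondNegSemidef A)
    (hB : IsCondNegSemidef B) : IsCondNegSemidef (A + B) := fun x hx => by
  rw [add_mulVec, dotProduct_add]
  exact add_nonpos (hA x hx) (hB x hx)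

theorem IsCondNegSemidef.sum_abs_eigenvalues {ι : Type} [Fintype ι] [DecidableEq ι] [Nonempty ι]
    {A : Matrix ι ι ℝ} (hneg : IsCondNegSemidef A) (hA : A.IsHermitian) (htr : A.trace = 0) :
    ∑ i, |hA.eigenvalues i| = 2 * maxEig A := by
  rw [maxEig_eq_iSup_eigenvalues hA]
  refine sum_abs_eq_two_mul_iSup ?_ fun i j =>
    eigenvalues_nonpos_or_nonpos_of_forall_dotProduct_eq_zero hA (w := 1) fun x hx =>
      hneg x (by rwa [one_dotProduct] at hx)
  simpa [htr] using hA.trace_eq_sum_eigenvalues.symm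

theorem isCondNegSemidef_norm_sub_sq {E : Type*} [NormedAddCommGroup E] [InnerProductSpace ℝ E]
    (v : ι → E) : IsCondNegSemidef (of fun i j => ‖v i - v j‖ ^ 2) := fun x hx => by
  have hform : x ⬝ᵥ (of fun i j => ‖v i - v j‖ ^ 2) *ᵥ x =
      ∑ i, ∑ j, x i * x j * (‖v i - v j‖ * ‖v i - v j‖) := by
    simp only [dotProduct, mulVec, of_apply, Finset.mul_sum, sq]
    exact Finset.sum_congr rfl fun i _ => Finset.sum_congr rfl fun j _ => by ring
  have hinner := inner_sum_smul_sum_smul_of_sum_eq_zero v hx v hx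
  linarith [real_inner_self_nonneg (x := ∑ i, x i • v i)]

theorem isCondNegSemidef_measureReal_symmDiff {α : Type*} [MeasurableSpace α] {μ : Measure α}
    {s : ι → Set α} (hs : ∀ i, MeasurableSet (s i)) (hμs : ∀ i, μ (s i) ≠ ⊤) :
    IsCondNegSemidef (of fun i j => μ.real (s i ∆ s j)) := by
  convert isCondNegSemidef_norm_sub_sq fun i => indicatorConstLp 2 (hs i) (hμs i) (1 : ℝ) with i j
  rw [← dist_eq_norm, dist_indicatorConstLp_eq_norm,
    norm_indicatorConstLp two_ne_zero ENNReal.ofNat_ne_top, norm_one, one_mul,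
    ENNReal.toReal_ofNat, ← Real.sqrt_eq_rpow, Real.sq_sqrt measureReal_nonneg]

theorem uIoc_symmDiff_uIoc {α : Type*} [LinearOrder α] (a b c : α) :
    Set.uIoc a b ∆ Set.uIoc a c = Set.uIoc b c := by
  ext t
  simp only [Set.mem_symmDiff, Set.mem_uIoc]
  grind

theorem isCondNegSemidef_abs_sub (p : ι → ℝ) : IsCondNegSemidef (of fun i j => |p i - p j|) := by
  convert isCondNegSemidef_measureReal_symmDiff (μ := volume) (s := fun i => Set.uIoc 0 (p i))
    (fun i => measurableSet_uIoc) (fun i => by simp) with i j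
  rw [uIoc_symmDiff_uIoc, measureReal_def, Real.volume_uIoc,
    ENNReal.toReal_ofReal (abs_nonneg _), abs_sub_comm]

theorem isCondNegSemidef_starD [DecidableEq ι] {c : ι → ℝ} (hc : ∀ i, 0 ≤ c i) :
    IsCondNegSemidef (starD c) := fun x hx => by
  have hform : x ⬝ᵥ starD c *ᵥ x = -2 * ∑ i, c i * x i ^ 2 := by
    have hdiag : x ⬝ᵥ diagonal c *ᵥ x = ∑ i, c i * x i ^ 2 :=
      Finset.sum_congr rfl fun i _ => by rw [mulVec_diagonal]; ring
    rw [starD_eq_vecMulVec_add_vecMulVec_sub, sub_mulVec, add_mulVec, vecMulVec_mulVec,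
      vecMulVec_mulVec, smul_mulVec, dotProduct_sub, dotProduct_add, dotProduct_smul,
      dotProduct_smul, dotProduct_smul, hdiag, one_dotProduct, dotProduct_one, hx]
    simp
  have : 0 ≤ ∑ i, c i * x i ^ 2 := Finset.sum_nonneg fun i _ => mul_nonneg (hc i) (sq_nonneg _)
  linarith

end CondNegSemidef

section CliquePath

variable {n1 k n2 : ℕ}

/-- The point of the line at which a vertex of the clique path is attached: path vertices sit at
`1, …, k - 1`, and the vertices of the two end cliques hang on the midpoints `1/2` and `k - 1/2` of
these cliques. -/
def attachPos (n1 k n2 : ℕ) : Fin n1 ⊕ Fin (k - 1) ⊕ Fin n2 → ℝ :=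
  Sum.elim (fun _ => 1 / 2) (Sum.elim (fun j => (j : ℝ) + 1) fun _ => (k : ℝ) - 1 / 2)

/-- The length of the pendant edge that joins a vertex of the clique path to its point of the line:
`1/2` for the vertices of the end cliques and `0` for the path vertices. -/
def pendantLength (n1 k n2 : ℕ) : Fin n1 ⊕ Fin (k - 1) ⊕ Fin n2 → ℝ :=
  Sum.elim (fun _ => 1 / 2) (Sum.elim (fun _ => 0) fun _ => 1 / 2)

theorem pendantLength_nonneg (v : Fin n1 ⊕ Fin (k - 1) ⊕ Fin n2) : 0 ≤ pendantLength n1 k n2 v := by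
  rcases v with _ | _ | _ <;> simp [pendantLength]

theorem cliquePathD_eq_abs_sub_add_starD (hk : 1 ≤ k) :
    cliquePathD n1 k n2 = (of fun v w => |attachPos n1 k n2 v - attachPos n1 k n2 w|) +
      starD (pendantLength n1 k n2) := by
  obtain ⟨m, rfl⟩ := Nat.exists_eq_add_of_le' hk
  have left_path (j : Fin m) : |(1 / 2 : ℝ) - (j + 1)| = j + 1 / 2 := by
    rw [abs_sub_comm, abs_of_nonneg] <;> linarith [Nat.cast_nonneg (α := ℝ) j]
  have path_right (j : Fin m) : |(j : ℝ) + 1 - (m + 1 - 1 / 2)| = m - j - 1 / 2 := by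
    have : (j : ℝ) + 1 ≤ m := by exact_mod_cast j.isLt
    rw [abs_sub_comm, abs_of_nonneg] <;> linarith
  have left_right : |(1 / 2 : ℝ) - (m + 1 - 1 / 2)| = m := by
    rw [abs_sub_comm, abs_of_nonneg] <;> linarith [Nat.cast_nonneg (α := ℝ) m]
  ext v w
  rcases v with i | i | i <;> rcases w with j | j | j <;>
    simp only [cliquePathD, uVec, wVec, pathD, attachPos, pendantLength, starD, Matrix.add_apply,
      of_apply, Sum.elim_inl, Sum.elim_inr, Sum.inl.injEq, Sum.inr.injEq, reduceCtorEq, if_false,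
      sub_self, abs_zero, zero_add, add_zero, ite_self, add_sub_add_right_eq_sub, add_halves,
      Nat.cast_add_one, Nat.add_sub_cancel]
  · rw [left_path]; ring
  · rw [left_right]
  · rw [abs_sub_comm, left_path]; ring
  · rw [path_right]; ring
  · rw [abs_sub_comm, left_right]
  · rw [abs_sub_comm, path_right]; ring

theorem trace_cliquePathD : (cliquePathD n1 k n2).trace = 0 := by
  simp [trace, Fintype.sum_sum_type, cliquePathD, pathD]

theorem isCondNegSemidef_cliquePathD (hk : 1 ≤ k) : IsCondNegSemidef (cliquePathD n1 k n2) := by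
  rw [cliquePathD_eq_abs_sub_add_starD hk]
  exact (isCondNegSemidef_abs_sub _).add (isCondNegSemidef_starD pendantLength_nonneg)

end CliquePath

/-- The distance energy of the clique path `ℙ_{n1+1,2,…,2,n2+1}`, i.e. the sum of the
absolute values of the eigenvalues of its distance matrix (with multiplicity),
equals twice the largest eigenvalue. -/
theorem distance_energy_cliquePathD
    (k n1 n2 : ℕ) (hk : 2 ≤ k) (hn1 : 1 ≤ n1) (hn2 : 1 ≤ n2)
    (hA : (cliquePathD n1 k n2).IsHermitian) :
    ∑ i, |hA.eigenvalues i| = 2 * maxEig (cliquePathD n1 k n2) := by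
  have : Nonempty (Fin n1 ⊕ Fin (k - 1) ⊕ Fin n2) := ⟨Sum.inl ⟨0, hn1⟩⟩
  exact (isCondNegSemidef_cliquePathD (by lia)).sum_abs_eigenvalues hA trace_cliquePathD
end
end

section
/- Let k ≥ 2 and n1, n2 ≥ 1, and set n = n1+k−1+n2. The symmetric matrix D(n1,k,n2) has exactly one positive eigenvalue and exactly n−1 negative eigenvalues, counted with multiplicity. -/
open Matrix

noncomputable section

/-!
The distance between two vertices of a clique tree is the number of cliques in which they have
different gates (nearest vertices), so the gates embed the graph isometrically into a Hamming
graph. On vectors `x` with zero sum the quadratic form of a Hamming metric is minus the sum, over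
all coordinates and all values of that coordinate, of the squared mass of `x` on the fibre. In a
clique tree these masses determine `x`, because a vertex other than `v` has gate `v` in all but
exactly one of the cliques containing `v`. Hence the distance matrix is negative definite on a
hyperplane, which gives `n - 1` negative eigenvalues, and its zero trace forces a positive one.
-/

section Inertia

variable {ι : Type*} [Fintype ι] [DecidableEq ι] {A : Matrix ι ι ℝ}

lemma dotProduct_mulVec_eq_sum_eigenvalues_mul_sq (hA : A.IsHermitian) (x : ι → ℝ) :
    x ⬝ᵥ A *ᵥ x =
      ∑ i, hA.eigenvalues i * (hA.eigenvectorBasis.repr (WithLp.toLp 2 x) i) ^ 2 := by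
  have repr_mulVec (i : ι) : hA.eigenvectorBasis.repr (WithLp.toLp 2 (A *ᵥ x)) i =
      hA.eigenvalues i * hA.eigenvectorBasis.repr (WithLp.toLp 2 x) i := by
    have hAT : Aᵀ = A := by simpa only [conjTranspose_eq_transpose_of_trivial] using hA.eq
    simp only [OrthonormalBasis.repr_apply_apply, EuclideanSpace.inner_eq_star_dotProduct,
      star_trivial]
    rw [dotProduct_comm, dotProduct_mulVec, ← mulVec_transpose, hAT,
      hA.mulVec_eigenvectorBasis, smul_dotProduct, smul_eq_mul, dotProduct_comm]
  calc x ⬝ᵥ A *ᵥ x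
      = inner ℝ (hA.eigenvectorBasis.repr (WithLp.toLp 2 x))
          (hA.eigenvectorBasis.repr (WithLp.toLp 2 (A *ᵥ x))) := by
        rw [LinearIsometryEquiv.inner_map_map, EuclideanSpace.inner_toLp_toLp, star_trivial,
          dotProduct_comm]
    _ = ∑ i, hA.eigenvalues i * (hA.eigenvectorBasis.repr (WithLp.toLp 2 x) i) ^ 2 := by
        simp only [PiLp.inner_apply, repr_mulVec, RCLike.inner_apply, conj_trivial]
        exact Finset.sum_congr rfl fun i _ => by ring

lemma toQuadraticForm'_equivalent_weightedSumSquares (hA : A.IsHermitian) :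
    A.toQuadraticForm'.Equivalent (QuadraticMap.weightedSumSquares ℝ hA.eigenvalues) :=
  ⟨{ (WithLp.linearEquiv 2 ℝ (ι → ℝ)).symm ≪≫ₗ hA.eigenvectorBasis.repr.toLinearEquiv ≪≫ₗ
        WithLp.linearEquiv 2 ℝ (ι → ℝ) with
      map_app' := fun x => by
        have := dotProduct_mulVec_eq_sum_eigenvalues_mul_sq hA x
        simp [QuadraticMap.weightedSumSquares_apply, Matrix.toQuadraticForm',
          toLinearMap₂'_apply', this, ← sq] }⟩

lemma finrank_le_card_eigenvalues_neg (hA : A.IsHermitian) {V : Submodule ℝ (ι → ℝ)}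
    (hV : ∀ x ∈ V, x ≠ 0 → x ⬝ᵥ A *ᵥ x < 0) :
    Module.finrank ℝ V ≤ (Finset.univ.filter fun i => hA.eigenvalues i < 0).card := by
  have negDef : ((-A.toQuadraticForm').restrict V).PosDef := fun x hx => by
    simpa [Matrix.toQuadraticForm', toLinearMap₂'_apply'] using
      hV x x.2 (by simpa using hx)
  calc Module.finrank ℝ V
      ≤ sigNeg A.toQuadraticForm' := le_sigNeg_of_negDef _ negDef
    _ = {i | hA.eigenvalues i < 0}.ncard :=
        QuadraticForm.sigNeg_of_equiv_weightedSumSquares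
          (toQuadraticForm'_equivalent_weightedSumSquares hA)
    _ = (Finset.univ.filter fun i => hA.eigenvalues i < 0).card := by
        rw [← Set.ncard_coe_finset, Finset.coe_filter_univ]

theorem inertia_of_neg_on_hyperplane [Nontrivial ι] (hA : A.IsHermitian) (htr : A.trace = 0)
    {V : Submodule ℝ (ι → ℝ)} (hdim : Module.finrank ℝ V + 1 = Fintype.card ι)
    (hV : ∀ x ∈ V, x ≠ 0 → x ⬝ᵥ A *ᵥ x < 0) :
    (Finset.univ.filter fun i => 0 < hA.eigenvalues i).card = 1 ∧
    (Finset.univ.filter fun i => hA.eigenvalues i < 0).card = Fintype.card ι - 1 := by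
  have hneg := finrank_le_card_eigenvalues_neg hA hV
  have hcard : 1 < Fintype.card ι := Fintype.one_lt_card
  obtain ⟨i, hi⟩ : (Finset.univ.filter fun i => hA.eigenvalues i < 0).Nonempty :=
    Finset.card_pos.mp (by omega)
  have hsum : ∑ i, hA.eigenvalues i = 0 := by
    simpa only [htr, RCLike.ofReal_real_eq_id, id_eq] using hA.trace_eq_sum_eigenvalues.symm
  obtain ⟨j, -, hj⟩ : ∃ j ∈ Finset.univ, 0 < hA.eigenvalues j :=
    Finset.exists_pos_of_sum_zero_of_exists_nonzero _ hsum
      ⟨i, Finset.mem_univ i, (Finset.mem_filter.mp hi).2.ne⟩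
  have hpos : 0 < (Finset.univ.filter fun i => 0 < hA.eigenvalues i).card :=
    Finset.card_pos.mpr ⟨j, by simpa using hj⟩
  have hdisj : Disjoint (Finset.univ.filter fun i => 0 < hA.eigenvalues i)
      (Finset.univ.filter fun i => hA.eigenvalues i < 0) :=
    Finset.disjoint_filter.mpr fun _ _ => lt_asymm
  have htotal := Finset.card_le_univ (Finset.disjUnion _ _ hdisj)
  rw [Finset.card_disjUnion] at htotal
  omega

end Inertia

section Hamming

lemma finrank_ker_sum_proj_add_one (K : Type*) [Field K] {ι : Type*} [Fintype ι] [Nonempty ι] :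
    Module.finrank K (LinearMap.ker (∑ i, LinearMap.proj i : (ι → K) →ₗ[K] K)) + 1 =
      Fintype.card ι := by
  classical
  have hne : (∑ i, LinearMap.proj i : (ι → K) →ₗ[K] K) ≠ 0 := fun h => by
    simpa using LinearMap.congr_fun h (Pi.single (Classical.arbitrary ι) 1)
  rw [Module.Dual.finrank_ker_add_one_of_ne_zero hne, Module.finrank_fintype_fun_eq_card]

lemma sum_mul_sum_fiber_eq_sum_sq {R V β : Type*} [CommSemiring R] [Fintype V] [Fintype β]
    [DecidableEq β] (g : V → β) (x : V → R) :
    ∑ p, x p * ∑ q with g q = g p, x q = ∑ b, (∑ p with g p = b, x p) ^ 2 := by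
  rw [← Finset.sum_fiberwise _ g]
  refine Finset.sum_congr rfl fun b _ => ?_
  rw [sq, Finset.sum_mul]
  refine Finset.sum_congr rfl fun p hp => ?_
  rw [(Finset.mem_filter.mp hp).2]

variable {V τ : Type*} {β : τ → Type*} [∀ t, DecidableEq (β t)]

/-- Every vertex `v` has a set `T` of coordinates such that each other vertex differs from `v` in
exactly one coordinate of `T`. When the coordinates are the cliques of a clique tree and `f p t` is
the vertex of clique `t` nearest to `p`, take for `T` the cliques containing `v`: a geodesic leaving
`v` does so through exactly one of them. -/
def HasUniqueExits (f : V → ∀ t, β t) : Prop :=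
  ∀ v, ∃ T : Finset τ, ∀ p ≠ v, (T.filter fun t => f p t ≠ f v t).card = 1

variable [Fintype V] {f : V → ∀ t, β t}

lemma HasUniqueExits.eq_zero {R : Type*} [Ring R] (hf : HasUniqueExits f) {x : V → R}
    (hx : ∑ p, x p = 0) (hfib : ∀ t b, ∑ p with f p t = b, x p = 0) : x = 0 := by
  classical
  funext v
  obtain ⟨T, hT⟩ := hf v
  have hcompl (t : τ) : ∑ p with f p t ≠ f v t, x p = 0 := by
    have := Finset.sum_filter_add_sum_filter_not Finset.univ (fun p => f p t = f v t) x
    rwa [hfib, hx, zero_add] at this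
  have hexit : ∑ p ∈ Finset.univ.erase v, x p = 0 := calc
    ∑ p ∈ Finset.univ.erase v, x p
      = ∑ p ∈ Finset.univ.erase v, ((T.filter fun t => f p t ≠ f v t).card : R) * x p :=
        Finset.sum_congr rfl fun p hp => by
          rw [hT p (Finset.ne_of_mem_erase hp), Nat.cast_one, one_mul]
    _ = ∑ p, ((T.filter fun t => f p t ≠ f v t).card : R) * x p :=
        Finset.sum_erase _ (by simp)
    _ = ∑ t ∈ T, ∑ p with f p t ≠ f v t, x p := by
        simp only [Finset.card_filter, Nat.cast_sum, Finset.sum_mul]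
        rw [Finset.sum_comm]
        simp [Finset.sum_filter]
    _ = 0 := Finset.sum_eq_zero fun t _ => hcompl t
  rwa [← Finset.add_sum_erase _ _ (Finset.mem_univ v), hexit, add_zero] at hx

variable [Fintype τ]

lemma dotProduct_hammingDist_mulVec {R : Type*} [CommRing R] [∀ t, Fintype (β t)]
    (f : V → ∀ t, β t) (x : V → R) :
    x ⬝ᵥ (of fun p q => (hammingDist (f p) (f q) : R)) *ᵥ x =
      Fintype.card τ * (∑ p, x p) ^ 2 - ∑ t, ∑ b, (∑ p with f p t = b, x p) ^ 2 := by
  have row (p : V) : ((of fun p q => (hammingDist (f p) (f q) : R)) *ᵥ x) p =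
      ∑ t, (∑ q, x q - ∑ q with f q t = f p t, x q) := by
    simp only [mulVec, dotProduct, of_apply, hammingDist, Finset.card_filter, Nat.cast_sum,
      Finset.sum_mul]
    rw [Finset.sum_comm]
    refine Finset.sum_congr rfl fun t _ => ?_
    rw [Finset.sum_filter, ← Finset.sum_sub_distrib]
    refine Finset.sum_congr rfl fun q _ => ?_
    by_cases h : f p t = f q t <;> simp [h, eq_comm]
  calc x ⬝ᵥ (of fun p q => (hammingDist (f p) (f q) : R)) *ᵥ x
      = ∑ t, ∑ p, x p * (∑ q, x q - ∑ q with f q t = f p t, x q) := by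
        simp only [dotProduct, row, Finset.mul_sum]
        exact Finset.sum_comm
    _ = ∑ t, ((∑ p, x p) ^ 2 - ∑ b, (∑ p with f p t = b, x p) ^ 2) := by
        simp only [mul_sub, Finset.sum_sub_distrib, ← Finset.sum_mul, ← sq,
          sum_mul_sum_fiber_eq_sum_sq]
    _ = Fintype.card τ * (∑ p, x p) ^ 2 - ∑ t, ∑ b, (∑ p with f p t = b, x p) ^ 2 := by
        simp

theorem HasUniqueExits.inertia [DecidableEq V] [Nontrivial V] [∀ t, Finite (β t)]
    (hf : HasUniqueExits f) {A : Matrix V V ℝ} (hA : A.IsHermitian)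
    (hdist : ∀ p q, A p q = hammingDist (f p) (f q)) :
    (Finset.univ.filter fun i => 0 < hA.eigenvalues i).card = 1 ∧
    (Finset.univ.filter fun i => hA.eigenvalues i < 0).card = Fintype.card V - 1 := by
  have (t : τ) : Fintype (β t) := Fintype.ofFinite (β t)
  have htr : A.trace = 0 := by simp [trace, hdist]
  refine inertia_of_neg_on_hyperplane hA htr (finrank_ker_sum_proj_add_one ℝ) fun x hx hx0 => ?_
  have hsum : ∑ p, x p = 0 := by simpa using hx
  have hquad : x ⬝ᵥ A *ᵥ x = -∑ t, ∑ b, (∑ p with f p t = b, x p) ^ 2 := by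
    rw [show A = of fun p q => (hammingDist (f p) (f q) : ℝ) from Matrix.ext hdist,
      dotProduct_hammingDist_mulVec, hsum]
    ring
  rw [hquad, neg_lt_zero]
  obtain ⟨t, b, htb⟩ : ∃ t b, ∑ p with f p t = b, x p ≠ 0 := by
    contrapose! hx0
    exact hf.eq_zero hsum hx0
  have hnonneg (t : τ) : 0 ≤ ∑ b, (∑ p with f p t = b, x p) ^ 2 := by positivity
  exact Finset.sum_pos' (fun t _ => hnonneg t) ⟨t, Finset.mem_univ t,
    Finset.sum_pos' (fun _ _ => sq_nonneg _) ⟨b, Finset.mem_univ b, by positivity⟩⟩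

end Hamming

section CliquePath

/-- The vertices of the clique path with `m + 1` cliques: those of the first clique other than its
cut vertex, the `m` cut vertices, and those of the last clique other than its cut vertex. -/
abbrev CliquePathVertex (n1 m n2 : ℕ) : Type := Fin n1 ⊕ Fin m ⊕ Fin n2

variable {n1 m n2 : ℕ}

/-- The position of a vertex along the clique path; clique `t` consists of the vertices at
positions `t` and `t + 1`. -/
def cliquePathPos : CliquePathVertex n1 m n2 → ℕ
  | .inl _ => 0
  | .inr (.inl s) => s + 1
  | .inr (.inr _) => m + 1

/-- The gate of `p` in clique `t`, that is, the vertex of that clique nearest to `p`. The default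
value `p` in `Fin.cases` and `Fin.lastCases` is reached only when `p` itself lies in the first,
respectively the last, clique. -/
def cliquePathGate (p : CliquePathVertex n1 m n2) (t : Fin (m + 1)) :
    CliquePathVertex n1 m n2 :=
  if cliquePathPos p ≤ t then Fin.cases p (fun s => .inr (.inl s)) t
  else Fin.lastCases p (fun s => .inr (.inl s)) t

@[simp] lemma cliquePathPos_left (i : Fin n1) :
    cliquePathPos (.inl i : CliquePathVertex n1 m n2) = 0 := rfl

@[simp] lemma cliquePathPos_mid (s : Fin m) :
    cliquePathPos (.inr (.inl s) : CliquePathVertex n1 m n2) = s + 1 := rfl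

@[simp] lemma cliquePathPos_right (j : Fin n2) :
    cliquePathPos (.inr (.inr j) : CliquePathVertex n1 m n2) = m + 1 := rfl

lemma cliquePathPos_le (p : CliquePathVertex n1 m n2) : cliquePathPos p ≤ m + 1 := by
  rcases p with _ | s | _ <;> simp

lemma cliquePathPos_gate (p : CliquePathVertex n1 m n2) (t : Fin (m + 1)) :
    cliquePathPos (cliquePathGate p t) = if cliquePathPos p ≤ t then (t : ℕ) else t + 1 := by
  have hp := cliquePathPos_le p
  unfold cliquePathGate
  split_ifs with h
  · cases t using Fin.cases with
    | zero => simpa using h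
    | succ s => simp
  · cases t using Fin.lastCases with
    | last =>
      rw [Fin.val_last] at h ⊢
      rw [Fin.lastCases_last]
      omega
    | cast s => simp

lemma cliquePathGate_succ_eq_iff (p : CliquePathVertex n1 m n2) (s : Fin m) :
    cliquePathGate p s.succ = .inr (.inl s) ↔ cliquePathPos p ≤ s + 1 := by
  refine ⟨fun h => ?_, fun h => by simp [cliquePathGate, h]⟩
  by_contra hp
  simpa [h, hp] using cliquePathPos_gate p s.succ

lemma cliquePathGate_castSucc_eq_iff (p : CliquePathVertex n1 m n2) (s : Fin m) :
    cliquePathGate p s.castSucc = .inr (.inl s) ↔ s < cliquePathPos p := by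
  refine ⟨fun h => ?_, fun h => by simp [cliquePathGate, h]⟩
  by_contra hp
  simpa [h, not_lt.mp hp] using cliquePathPos_gate p s.castSucc

lemma cliquePathGate_zero_eq_left_iff (p : CliquePathVertex n1 m n2) (i : Fin n1) :
    cliquePathGate p 0 = .inl i ↔ p = .inl i := by
  refine ⟨fun h => ?_, fun h => by simp [cliquePathGate, h]⟩
  have := cliquePathPos_gate p 0
  by_cases hp : cliquePathPos p = 0
  · simpa [cliquePathGate, hp] using h
  · simp [h, hp] at this

lemma cliquePathGate_last_eq_right_iff (p : CliquePathVertex n1 m n2) (j : Fin n2) :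
    cliquePathGate p (Fin.last m) = .inr (.inr j) ↔ p = .inr (.inr j) := by
  refine ⟨fun h => ?_, fun h => by simp [cliquePathGate, h]⟩
  have := cliquePathPos_gate p (Fin.last m)
  by_cases hp : cliquePathPos p ≤ m
  · simp [h, hp] at this
  · simpa [cliquePathGate, hp] using h

lemma cliquePathPos_eq_succ_iff (p : CliquePathVertex n1 m n2) (s : Fin m) :
    cliquePathPos p = s + 1 ↔ p = .inr (.inl s) := by
  rcases p with i | r | j
  · simp
  · simp [Fin.ext_iff]
  · simp [s.2.ne']

lemma hasUniqueExits_cliquePathGate :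
    HasUniqueExits (cliquePathGate : CliquePathVertex n1 m n2 → _) := by
  rintro (i | s | j)
  · refine ⟨{0}, fun p hp => ?_⟩
    have hgate : cliquePathGate (.inl i : CliquePathVertex n1 m n2) 0 = .inl i :=
      (cliquePathGate_zero_eq_left_iff _ i).2 rfl
    simp [Finset.filter_singleton, hgate, cliquePathGate_zero_eq_left_iff, hp]
  · refine ⟨{s.castSucc, s.succ}, fun p hp => ?_⟩
    have hpos : cliquePathPos p ≠ s + 1 := (cliquePathPos_eq_succ_iff p s).not.mpr hp
    have hcast : cliquePathGate (.inr (.inl s) : CliquePathVertex n1 m n2) s.castSucc =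
        .inr (.inl s) := (cliquePathGate_castSucc_eq_iff _ s).2 (by simp)
    have hsucc : cliquePathGate (.inr (.inl s) : CliquePathVertex n1 m n2) s.succ =
        .inr (.inl s) := (cliquePathGate_succ_eq_iff _ s).2 (by simp)
    simp only [Finset.filter_insert, Finset.filter_singleton, hcast, hsucc, ne_eq,
      cliquePathGate_castSucc_eq_iff, cliquePathGate_succ_eq_iff]
    split_ifs <;> first | rfl | omega
  · refine ⟨{Fin.last m}, fun p hp => ?_⟩
    have hgate : cliquePathGate (.inr (.inr j) : CliquePathVertex n1 m n2) (Fin.last m) =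
        .inr (.inr j) := (cliquePathGate_last_eq_right_iff _ j).2 rfl
    simp [Finset.filter_singleton, hgate, cliquePathGate_last_eq_right_iff, hp]

lemma cliquePathGate_ne_iff_of_pos_lt {p q : CliquePathVertex n1 m n2}
    (h : cliquePathPos p < cliquePathPos q) (t : Fin (m + 1)) :
    cliquePathGate p t ≠ cliquePathGate q t ↔ cliquePathPos p ≤ t ∧ t < cliquePathPos q := by
  have hq := cliquePathPos_le q
  constructor
  · contrapose!
    intro hpq
    rcases le_or_gt (cliquePathPos p) t with hpt | hpt
    · cases t using Fin.cases with
      | zero => exact absurd (h.trans_le (hpq hpt)) (Nat.not_lt_zero _)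
      | succ s =>
        exact ((cliquePathGate_succ_eq_iff p s).2 hpt).trans
          ((cliquePathGate_succ_eq_iff q s).2 (hpq hpt)).symm
    · cases t using Fin.lastCases with
      | last =>
        rw [Fin.val_last] at hpt
        omega
      | cast s =>
        exact ((cliquePathGate_castSucc_eq_iff p s).2 hpt).trans
          ((cliquePathGate_castSucc_eq_iff q s).2 (hpt.trans h)).symm
  · rintro ⟨hpt, htq⟩ heq
    have hpos := congrArg cliquePathPos heq
    simp [cliquePathPos_gate, hpt, htq.not_ge] at hpos

lemma hammingDist_cliquePathGate_of_pos_lt {p q : CliquePathVertex n1 m n2}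
    (h : cliquePathPos p < cliquePathPos q) :
    hammingDist (cliquePathGate p) (cliquePathGate q) = cliquePathPos q - cliquePathPos p := by
  have hq := cliquePathPos_le q
  have hmap : (Finset.univ.filter fun t : Fin (m + 1) =>
      cliquePathPos p ≤ t ∧ t < cliquePathPos q).map Fin.valEmbedding =
      Finset.Ico (cliquePathPos p) (cliquePathPos q) := by
    ext a
    simp only [Finset.mem_map, Finset.mem_filter, Finset.mem_univ, true_and, Finset.mem_Ico,
      Fin.valEmbedding_apply]
    exact ⟨fun ⟨_, ht, hta⟩ => hta ▸ ht, fun ha => ⟨⟨a, by omega⟩, ha, rfl⟩⟩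
  simp only [hammingDist, cliquePathGate_ne_iff_of_pos_lt h]
  rw [← Finset.card_map Fin.valEmbedding, hmap, Nat.card_Ico]

lemma hammingDist_cliquePathGate_left {i j : Fin n1} (h : i ≠ j) :
    hammingDist (cliquePathGate (.inl i : CliquePathVertex n1 m n2)) (cliquePathGate (.inl j)) =
      1 := by
  simp [hammingDist, Fin.card_filter_univ_succ, cliquePathGate, h]

lemma hammingDist_cliquePathGate_right {i j : Fin n2} (h : i ≠ j) :
    hammingDist (cliquePathGate (.inr (.inr i) : CliquePathVertex n1 m n2))
      (cliquePathGate (.inr (.inr j))) = 1 := by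
  rw [hammingDist, Finset.card_eq_one]
  refine ⟨Fin.last m, ?_⟩
  ext t
  cases t using Fin.lastCases with
  | last => simp [cliquePathGate, h]
  | cast s => simp [cliquePathGate, Fin.castSucc_ne_last, s.2.le.not_gt]

lemma cliquePathD_succ_apply (p q : CliquePathVertex n1 m n2) :
    cliquePathD n1 (m + 1) n2 p q = hammingDist (cliquePathGate p) (cliquePathGate q) := by
  have of_lt {p q : CliquePathVertex n1 m n2} (h : cliquePathPos p < cliquePathPos q) :
      (hammingDist (cliquePathGate p) (cliquePathGate q) : ℝ) =
        cliquePathPos q - cliquePathPos p := by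
    rw [hammingDist_cliquePathGate_of_pos_lt h, Nat.cast_sub h.le]
  have of_gt {p q : CliquePathVertex n1 m n2} (h : cliquePathPos q < cliquePathPos p) :
      (hammingDist (cliquePathGate p) (cliquePathGate q) : ℝ) =
        cliquePathPos p - cliquePathPos q := by
    rw [hammingDist_comm, of_lt h]
  rcases p with i | s | j <;> rcases q with i' | s' | j'
  · rcases eq_or_ne i i' with rfl | h
    · simp [cliquePathD]
    · simp [cliquePathD, hammingDist_cliquePathGate_left, h]
  · rw [of_lt (by simp)]
    simp [cliquePathD, uVec]
  · rw [of_lt (by simp)]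
    simp [cliquePathD]
  · rw [of_gt (by simp)]
    simp [cliquePathD, uVec]
  · rcases lt_trichotomy s s' with h | rfl | h
    · rw [of_lt (by simpa using h)]
      simp [cliquePathD, pathD, abs_sub_comm (s : ℝ), h.le]
    · simp [cliquePathD, pathD]
    · rw [of_gt (by simpa using h)]
      simp [cliquePathD, pathD, h.le]
  · rw [of_lt (by simp)]
    simp [cliquePathD, wVec]
  · rw [of_gt (by simp)]
    simp [cliquePathD]
  · rw [of_gt (by simp)]
    simp [cliquePathD, wVec]
  · rcases eq_or_ne j j' with rfl | h
    · simp [cliquePathD]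
    · simp [cliquePathD, hammingDist_cliquePathGate_right, h]

end CliquePath

/-- The distance matrix of the clique path `ℙ_{n1+1,2,…,2,n2+1}` on `n = n1 + (k-1) + n2`
vertices has exactly one positive eigenvalue and exactly `n - 1` negative eigenvalues,
counted with multiplicity. -/
theorem inertia_cliquePathD
    (k n1 n2 : ℕ) (hk : 2 ≤ k) (hn1 : 1 ≤ n1) (hn2 : 1 ≤ n2)
    (hA : (cliquePathD n1 k n2).IsHermitian) :
    (Finset.univ.filter fun i => 0 < hA.eigenvalues i).card = 1 ∧
    (Finset.univ.filter fun i => hA.eigenvalues i < 0).card = (n1 + (k - 1) + n2) - 1 := by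
  obtain ⟨m, rfl⟩ : ∃ m, k = m + 1 := ⟨k - 1, by omega⟩
  have : Nontrivial (CliquePathVertex n1 m n2) :=
    ⟨.inl ⟨0, hn1⟩, .inr (.inr ⟨0, hn2⟩), Sum.inl_ne_inr⟩
  have hcard : Fintype.card (CliquePathVertex n1 m n2) = n1 + m + n2 := by
    simp [add_assoc]
  have hinertia := hasUniqueExits_cliquePathGate.inertia (V := CliquePathVertex n1 m n2)
    hA cliquePathD_succ_apply
  rwa [hcard] at hinertia
end
end

section
/- Let k ≥ 2 and n1, n2 ≥ 1. Partition the index set of D(n1,k,n2) into X_1 (the first n1 indices), the k−1 singletons corresponding to the middle block, and X_{k+1} (the last n2 indices), and let S be the (n1+k−1+n2)×(k+1) characteristic matrix of this partition (S_{ij} = 1 if index i lies in the j-th part, and 0 otherwise). Then this partition is equitable with quotient matrix B(n1,k,n2); that is, D(n1,k,n2)·S = S·B(n1,k,n2). -/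
open Matrix

noncomputable section

/-- The quotient matrix `B(n1,k,n2)` of the clique path distance matrix. -/
def quotB (n1 k n2 : ℕ) :
    Matrix (Unit ⊕ Fin (k - 1) ⊕ Unit) (Unit ⊕ Fin (k - 1) ⊕ Unit) ℝ :=
  fun p q =>
    match p, q with
    | Sum.inl _, Sum.inl _ => (n1 : ℝ) - 1
    | Sum.inl _, Sum.inr (Sum.inl j) => uVec (k - 1) j
    | Sum.inl _, Sum.inr (Sum.inr _) => (k : ℝ) * n2
    | Sum.inr (Sum.inl i), Sum.inl _ => (n1 : ℝ) * uVec (k - 1) i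
    | Sum.inr (Sum.inl i), Sum.inr (Sum.inl j) => pathD (k - 1) i j
    | Sum.inr (Sum.inl i), Sum.inr (Sum.inr _) => (n2 : ℝ) * wVec (k - 1) i
    | Sum.inr (Sum.inr _), Sum.inl _ => (k : ℝ) * n1
    | Sum.inr (Sum.inr _), Sum.inr (Sum.inl j) => wVec (k - 1) j
    | Sum.inr (Sum.inr _), Sum.inr (Sum.inr _) => (n2 : ℝ) - 1

/-- Characteristic matrix of the partition of the vertices of the clique path into the first
clique minus the cut vertex, the `k-1` cut/path vertices (as singletons), and the last clique
minus the cut vertex. -/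
def charS (n1 k n2 : ℕ) :
    Matrix (Fin n1 ⊕ Fin (k - 1) ⊕ Fin n2) (Unit ⊕ Fin (k - 1) ⊕ Unit) ℝ :=
  fun p q =>
    match p, q with
    | Sum.inl _, Sum.inl _ => 1
    | Sum.inr (Sum.inl i), Sum.inr (Sum.inl j) => if i = j then 1 else 0
    | Sum.inr (Sum.inr _), Sum.inr (Sum.inr _) => 1
    | _, _ => 0

/-!
Let `S` be the characteristic matrix of a partition with labelling `π`. Multiplying by `S` on the
right sums each row over the parts, while multiplying by `S` on the left copies the row `π v` into
the row `v`; so `A * S = S * B` says exactly that row `v` of `A` sums over the part `p` to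
`B (π v) p`. For the clique path each part is an end block or a single vertex, and the entries of a
row are constant on each part, except inside a clique, where the zero on the diagonal accounts for
the `- 1`.
-/

section EquitablePartition

variable {V W P Q R : Type*} [DecidableEq P]

/-- The characteristic matrix of the partition of `V` into the fibres of `π`. Partitions are encoded
by the map sending an element to the label of its part, so that empty parts are allowed. -/
def partitionMatrix (R : Type*) [Zero R] [One R] (π : V → P) : Matrix V P R :=
  of fun v p => if π v = p then 1 else 0

/-- The partition of `V` into the fibres of `π` is equitable for `A`, with quotient matrix `B`: the
sum of row `v` of `A` over the part `p` is the entry of `B` at the part of `v` and `p`. -/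
def IsEquitablePartition [Fintype V] [AddCommMonoid R] (A : Matrix V V R) (π : V → P)
    (B : Matrix P P R) : Prop :=
  ∀ v p, ∑ u with π u = p, A v u = B (π v) p

variable [NonAssocSemiring R]

theorem mul_partitionMatrix_apply [Fintype V] (A : Matrix W V R) (π : V → P) (w : W) (p : P) :
    (A * partitionMatrix R π) w p = ∑ v with π v = p, A w v := by
  simp [mul_apply, partitionMatrix, Finset.sum_filter]

theorem partitionMatrix_mul [Fintype P] (π : V → P) (B : Matrix P Q R) :
    partitionMatrix R π * B = B.submatrix π id := by
  ext v q
  simp [mul_apply, partitionMatrix]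

theorem isEquitablePartition_iff_mul_partitionMatrix_eq [Fintype V] [Fintype P]
    {A : Matrix V V R} {π : V → P} {B : Matrix P P R} :
    IsEquitablePartition A π B ↔ A * partitionMatrix R π = partitionMatrix R π * B := by
  simp only [← Matrix.ext_iff, mul_partitionMatrix_apply, partitionMatrix_mul, submatrix_apply,
    id_eq, IsEquitablePartition]

end EquitablePartition

section FibreSums

variable {α β γ M : Type*} [AddCommMonoid M]

/-- The labelling of the partition of `α ⊕ β ⊕ γ` whose parts are `α`, the singletons of `β`, and
`γ`; for the clique path `β` is the set of cut vertices. -/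
def collapseEnds : α ⊕ β ⊕ γ → Unit ⊕ β ⊕ Unit :=
  Sum.map (fun _ => ()) (Sum.map id fun _ => ())

variable [Fintype α] [Fintype β] [Fintype γ] [DecidableEq β] (F : α ⊕ β ⊕ γ → M)

theorem sum_filter_collapseEnds_eq_left :
    ∑ x with collapseEnds x = Sum.inl (), F x = ∑ i, F (Sum.inl i) := by
  rw [Finset.sum_filter]
  simp [collapseEnds]

theorem sum_filter_collapseEnds_eq_middle (j : β) :
    ∑ x with collapseEnds x = Sum.inr (Sum.inl j), F x = F (Sum.inr (Sum.inl j)) := by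
  rw [Finset.sum_filter]
  simp [collapseEnds]

theorem sum_filter_collapseEnds_eq_right :
    ∑ x with collapseEnds x = Sum.inr (Sum.inr ()), F x = ∑ i, F (Sum.inr (Sum.inr i)) := by
  rw [Finset.sum_filter]
  simp [collapseEnds]

end FibreSums

theorem sum_ite_eq_zero_one_eq_card_sub_one {ι R : Type*} [Fintype ι] [DecidableEq ι]
    [AddCommGroupWithOne R] (i : ι) :
    ∑ j, (if i = j then (0 : R) else 1) = Fintype.card ι - 1 :=
  calc
    ∑ j, (if i = j then (0 : R) else 1) = ∑ j, (1 - if i = j then (1 : R) else 0) :=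
      Finset.sum_congr rfl fun j _ => by split_ifs <;> simp
    _ = Fintype.card ι - 1 := by simp [Finset.sum_sub_distrib]

theorem charS_eq_partitionMatrix (n1 k n2 : ℕ) :
    charS n1 k n2 = partitionMatrix ℝ collapseEnds := by
  ext (_ | _ | _) (_ | _ | _) <;> simp [charS, partitionMatrix, collapseEnds]

theorem isEquitablePartition_cliquePathD (n1 k n2 : ℕ) :
    IsEquitablePartition (cliquePathD n1 k n2) collapseEnds (quotB n1 k n2) := by
  rintro v (_ | _ | _)
  · rw [sum_filter_collapseEnds_eq_left]
    rcases v with _ | _ | _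
    · simp [cliquePathD, quotB, collapseEnds, sum_ite_eq_zero_one_eq_card_sub_one]
    · simp [cliquePathD, quotB, collapseEnds]
    · simp [cliquePathD, quotB, collapseEnds, mul_comm]
  · rw [sum_filter_collapseEnds_eq_middle]
    rcases v with _ | _ | _ <;> rfl
  · rw [sum_filter_collapseEnds_eq_right]
    rcases v with _ | _ | _
    · simp [cliquePathD, quotB, collapseEnds, mul_comm]
    · simp [cliquePathD, quotB, collapseEnds]
    · simp [cliquePathD, quotB, collapseEnds, sum_ite_eq_zero_one_eq_card_sub_one]

/-- The natural partition of the clique path is equitable with quotient matrix `B(n1,k,n2)`: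
`D(n1,k,n2) · S = S · B(n1,k,n2)`. -/
theorem cliquePathD_mul_charS_eq_charS_mul_quotB
    (k n1 n2 : ℕ) (hk : 2 ≤ k) (hn1 : 1 ≤ n1) (hn2 : 1 ≤ n2) :
    cliquePathD n1 k n2 * charS n1 k n2 = charS n1 k n2 * quotB n1 k n2 := by
  rw [charS_eq_partitionMatrix, ← isEquitablePartition_iff_mul_partitionMatrix_eq]
  exact isEquitablePartition_cliquePathD n1 k n2
end
end

section
/- Let A be an n×n real symmetric matrix with all entries nonnegative, and let x be a real number with x > λ(A), the largest eigenvalue of A. Then xI − A is invertible and every entry of (xI − A)^{−1} is nonnegative. -/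
open Matrix

noncomputable section

/-!
Since `x` exceeds every eigenvalue of the symmetric matrix `A`, the matrix `M = xI - A` is positive
definite, and its off-diagonal entries are nonpositive. If `M v ≥ 0`, split `v = v⁺ - v⁻`: the
supports of `v⁺` and `v⁻` are disjoint, so `⟨v⁻, M v⁺⟩` only involves off-diagonal entries and is
nonpositive, whence `⟨v⁻, M v⁻⟩ = ⟨v⁻, M v⁺⟩ - ⟨v⁻, M v⟩ ≤ 0`. Positivity forces `v⁻ = 0`, that is,
`v ≥ 0`. Solving `M v = e_j` then gives the nonnegativity of the columns of `M⁻¹`.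
-/

section MonotoneMatrix

variable {ι : Type*} [Fintype ι]

/-- Monotone matrices in the sense of Collatz: `M v ≥ 0` implies `v ≥ 0`, both inequalities being
entrywise. Over an ordered field these are the invertible matrices with entrywise nonnegative
inverse. -/
def IsMonotoneMatrix {R : Type*} [NonUnitalNonAssocSemiring R] [LE R] (M : Matrix ι ι R) : Prop :=
  ∀ v : ι → R, 0 ≤ M *ᵥ v → 0 ≤ v

namespace IsMonotoneMatrix

theorem mulVec_injective {R : Type*} [NonUnitalNonAssocRing R] [PartialOrder R]
    [IsOrderedAddMonoid R] {M : Matrix ι ι R} (hM : IsMonotoneMatrix M) :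
    Function.Injective M.mulVec := by
  intro v w hvw
  refine le_antisymm ?_ ?_
  · exact sub_nonneg.1 <| hM _ (by rw [mulVec_sub, hvw, sub_self])
  · exact sub_nonneg.1 <| hM _ (by rw [mulVec_sub, hvw, sub_self])

variable {K : Type*} [Field K] [PartialOrder K] [IsOrderedRing K] [DecidableEq ι]
  {M : Matrix ι ι K}

theorem isUnit (hM : IsMonotoneMatrix M) : IsUnit M :=
  mulVec_injective_iff_isUnit.1 hM.mulVec_injective

theorem inv_nonneg (hM : IsMonotoneMatrix M) (i j : ι) : 0 ≤ M⁻¹ i j := by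
  have hdet : IsUnit M.det := (isUnit_iff_isUnit_det M).1 hM.isUnit
  have hcol : M *ᵥ M⁻¹.col j = Pi.single j 1 := by
    rw [← mulVec_single_one, mulVec_mulVec, mul_nonsing_inv M hdet, one_mulVec]
  exact hM (M⁻¹.col j) (hcol ▸ Pi.single_nonneg.2 zero_le_one) i

end IsMonotoneMatrix

variable {R : Type*} [Ring R] [LinearOrder R] [IsOrderedRing R] {M : Matrix ι ι R}

theorem negPart_dotProduct_mulVec_posPart_nonpos (hoff : ∀ i j, i ≠ j → M i j ≤ 0) (v : ι → R) :
    v⁻ ⬝ᵥ M *ᵥ v⁺ ≤ 0 := by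
  simp only [dotProduct, mulVec, Finset.mul_sum]
  refine Finset.sum_nonpos fun i _ => Finset.sum_nonpos fun j _ => ?_
  obtain rfl | hij := eq_or_ne i j
  · obtain hi | hi := le_total 0 (v i)
    · simp [negPart_eq_zero.2 hi]
    · simp [posPart_eq_zero.2 hi]
  · exact mul_nonpos_of_nonneg_of_nonpos (negPart_nonneg (v i))
      (mul_nonpos_of_nonpos_of_nonneg (hoff i j hij) (posPart_nonneg (v j)))

theorem isMonotoneMatrix_of_dotProduct_mulVec_pos (hoff : ∀ i j, i ≠ j → M i j ≤ 0)
    (hpos : ∀ v : ι → R, v ≠ 0 → 0 < v ⬝ᵥ M *ᵥ v) : IsMonotoneMatrix M := by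
  intro v hv
  have hsplit : v⁺ - v = v⁻ := sub_eq_of_eq_add' (sub_eq_iff_eq_add.1 (posPart_sub_negPart v))
  have hle : v⁻ ⬝ᵥ M *ᵥ v⁻ ≤ 0 := calc
    v⁻ ⬝ᵥ M *ᵥ v⁻ = v⁻ ⬝ᵥ M *ᵥ v⁺ - v⁻ ⬝ᵥ M *ᵥ v := by
      rw [← dotProduct_sub, ← mulVec_sub, hsplit]
    _ ≤ 0 := sub_nonpos_of_le <|
      (negPart_dotProduct_mulVec_posPart_nonpos hoff v).trans
        (dotProduct_nonneg_of_nonneg (negPart_nonneg v) hv)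
  have hzero : v⁻ = 0 := by
    by_contra hne
    exact (hpos _ hne).not_ge hle
  exact negPart_eq_zero.1 hzero

end MonotoneMatrix

section MaxEig

variable {ι : Type} [Fintype ι] {A : Matrix ι ι ℝ}

theorem le_maxEig {μ : ℝ} {v : ι → ℝ} (hv : v ≠ 0) (hμ : A *ᵥ v = μ • v) : μ ≤ maxEig A := by
  classical
  refine le_csSup ((Module.End.finite_hasEigenvalue (toLin' A)).subset ?_).bddAbove ⟨v, hv, hμ⟩
  rintro ν ⟨w, hw, hν⟩
  exact Module.End.hasEigenvalue_of_hasEigenvector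
    ⟨Module.End.mem_eigenspace_iff.2 (by rwa [toLin'_apply]), hw⟩

theorem posDef_smul_one_sub_of_maxEig_lt [DecidableEq ι] (hA : A.IsSymm) {x : ℝ}
    (hx : maxEig A < x) : (x • (1 : Matrix ι ι ℝ) - A).PosDef := by
  have hM : (x • (1 : Matrix ι ι ℝ) - A).IsHermitian := by
    rw [IsHermitian, conjTranspose_eq_transpose_of_trivial]
    exact (isSymm_one.smul x).sub hA
  refine hM.posDef_iff_eigenvalues_pos.2 fun i => ?_
  have hne : (hM.eigenvectorBasis i).ofLp ≠ 0 :=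
    (WithLp.ofLp_eq_zero 2).not.2 (hM.eigenvectorBasis.orthonormal.ne_zero i)
  have heig : A *ᵥ (hM.eigenvectorBasis i).ofLp =
      (x - hM.eigenvalues i) • (hM.eigenvectorBasis i).ofLp := by
    rw [sub_smul, ← hM.mulVec_eigenvectorBasis i, sub_mulVec, smul_mulVec, one_mulVec,
      sub_sub_cancel]
  linarith [le_maxEig hne heig]

end MaxEig

theorem resolvent_nonneg_of_symm_nonneg_general {ι : Type} [Fintype ι] [DecidableEq ι]
    {A : Matrix ι ι ℝ} (hsym : A.IsSymm) (hoff : ∀ i j, i ≠ j → 0 ≤ A i j) {x : ℝ}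
    (hx : maxEig A < x) :
    IsUnit (x • (1 : Matrix ι ι ℝ) - A) ∧ ∀ i j, 0 ≤ (x • (1 : Matrix ι ι ℝ) - A)⁻¹ i j := by
  have hpos : (x • (1 : Matrix ι ι ℝ) - A).PosDef := posDef_smul_one_sub_of_maxEig_lt hsym hx
  have hmono : IsMonotoneMatrix (x • (1 : Matrix ι ι ℝ) - A) :=
    isMonotoneMatrix_of_dotProduct_mulVec_pos
      (fun i j hij => by simpa [one_apply_ne hij] using hoff i j hij)
      (fun v hv => by simpa only [star_trivial] using hpos.dotProduct_mulVec_pos hv)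
  exact ⟨hmono.isUnit, hmono.inv_nonneg⟩

/-- If `A` is a real symmetric matrix with nonnegative entries and `x > λ(A)`,
then `xI − A` is invertible and `(xI − A)⁻¹` has nonnegative entries. -/
theorem resolvent_nonneg_of_symm_nonneg
    (n : ℕ) (A : Matrix (Fin n) (Fin n) ℝ) (hsym : A.IsSymm)
    (hnn : ∀ i j, 0 ≤ A i j) (x : ℝ) (hx : maxEig A < x) :
    IsUnit (x • (1 : Matrix (Fin n) (Fin n) ℝ) - A) ∧
    ∀ i j, 0 ≤ (x • (1 : Matrix (Fin n) (Fin n) ℝ) - A)⁻¹ i j :=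
  resolvent_nonneg_of_symm_nonneg_general hsym (fun i j _ => hnn i j) hx
end
end
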